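/- arXiv:2209.11149 — 4 statements merged into one kernel-verified Lean document; each statement's English description precedes it below -/
import Mathlib

section
/- Let n ≥ 1, let ρ ∈ Matrix (Fin n) (Fin n) ℂ be positive definite, and let A ∈ Matrix (Fin n) (Fin n) ℂ be Hermitian. Then the map ε ↦ log(ρ + ε·A) (matrix logarithm defined by functional calculus on positive definite matrices, defined for all sufficiently small real ε) is differentiable at ε = 0 with derivative ∫₀^∞ (t·I + ρ)⁻¹ · A · (t·I + ρ)⁻¹ dt, a convergent improper Bochner integral. -/
open scoped ComplexOrder Matrix

/-- Matrix logarithm of a positive definite (Hermitian) matrix, defined by applying the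
real logarithm to the eigenvalues in a spectral decomposition. -/
noncomputable def mlog {n : ℕ} (ρ : Matrix (Fin n) (Fin n) ℂ) :
    Matrix (Fin n) (Fin n) ℂ :=
  if h : ρ.IsHermitian then
    (h.eigenvectorUnitary : Matrix (Fin n) (Fin n) ℂ) *
      Matrix.diagonal (fun i => ((Real.log (h.eigenvalues i) : ℝ) : ℂ)) *
      (h.eigenvectorUnitary : Matrix (Fin n) (Fin n) ℂ)ᴴ
  else 0

open MeasureTheory Filter Topology

lemma scal_aux (l : ℝ) (hl : 0 < l) :
    IntegrableOn (fun t : ℝ => (1+t)⁻¹ - (t+l)⁻¹) (Set.Ioi 0) ∧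
    ∫ t in Set.Ioi (0:ℝ), ((1+t)⁻¹ - (t+l)⁻¹) = Real.log l := by
  have hd : ∀ x ∈ Set.Ici (0:ℝ), HasDerivAt (fun t : ℝ => Real.log (1+t) - Real.log (t+l))
      ((1+x)⁻¹ - (x+l)⁻¹) x := by
    intro x hx
    have hx : 0 ≤ x := hx
    have h1 := ((hasDerivAt_id x).const_add 1).log (by simp; positivity)
    have h2 := ((hasDerivAt_id x).add_const l).log (by simp; positivity)
    have h3 := h1.sub h2
    simp only [id, one_div] at h3
    exact h3
  have ht : Tendsto (fun t : ℝ => Real.log (1+t) - Real.log (t+l)) atTop (𝓝 0) := by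
    have h0 : Tendsto (fun t : ℝ => 1 + (1-l) * (t+l)⁻¹) atTop (𝓝 (1 + (1-l) * 0)) :=
      ((tendsto_inv_atTop_zero.comp (tendsto_atTop_add_const_right _ l tendsto_id)).const_mul _).const_add _
    have h1 := h0.log (by simp)
    simp only [mul_zero, add_zero, Real.log_one] at h1
    refine h1.congr' ?_
    filter_upwards [eventually_gt_atTop 0] with t ht
    rw [← Real.log_div (by positivity) (by positivity)]
    congr 1
    field_simp
    ring
  have hi : IntegrableOn (fun t : ℝ => (1+t)⁻¹ - (t+l)⁻¹) (Set.Ioi 0) := by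
    rcases le_total 1 l with h | h
    · refine integrableOn_Ioi_deriv_of_nonneg' hd (fun x hx => ?_) ht
      have hx : 0 < x := hx
      have : (x+l)⁻¹ ≤ (1+x)⁻¹ := inv_anti₀ (by positivity) (by linarith)
      linarith
    · refine integrableOn_Ioi_deriv_of_nonpos' hd (fun x hx => ?_) ht
      have hx : 0 < x := hx
      have : (1+x)⁻¹ ≤ (x+l)⁻¹ := inv_anti₀ (by positivity) (by linarith)
      linarith
  refine ⟨hi, ?_⟩
  rw [integral_Ioi_of_hasDerivAt_of_tendsto' hd hi ht]
  simp

lemma scal_sq (c : ℝ) (hc : 0 < c) :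
    IntegrableOn (fun t : ℝ => ((t+c)⁻¹)^2) (Set.Ioi 0) := by
  have hd : ∀ x ∈ Set.Ici (0:ℝ), HasDerivAt (fun t : ℝ => -(t+c)⁻¹) (((x+c)⁻¹)^2) x := by
    intro x hx
    have hx : 0 ≤ x := hx
    have h2 := (((hasDerivAt_id x).add_const c).inv (by simp; positivity)).neg
    refine HasDerivAt.congr_deriv (f := fun t : ℝ => -(t+c)⁻¹) h2 ?_
    rw [inv_pow, neg_div, neg_neg, one_div]; rfl
  refine integrableOn_Ioi_deriv_of_nonneg' hd (fun x hx => by positivity) (l := -0) ?_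
  exact (tendsto_inv_atTop_zero.comp (tendsto_atTop_add_const_right _ c tendsto_id)).neg

section aux
variable {n : ℕ}

lemma spec_aux {X : Matrix (Fin n) (Fin n) ℂ} (h : X.IsHermitian) :
    X = (h.eigenvectorUnitary : Matrix (Fin n) (Fin n) ℂ) *
      Matrix.diagonal (fun i => ((h.eigenvalues i : ℝ) : ℂ)) *
      (h.eigenvectorUnitary : Matrix (Fin n) (Fin n) ℂ)ᴴ := by
  have := h.spectral_theorem
  simpa [Unitary.conjStarAlgAut_apply, Function.comp_def, Matrix.star_eq_conjTranspose] using this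

lemma U_aux {X : Matrix (Fin n) (Fin n) ℂ} (h : X.IsHermitian) :
    (h.eigenvectorUnitary : Matrix (Fin n) (Fin n) ℂ) *
      (h.eigenvectorUnitary : Matrix (Fin n) (Fin n) ℂ)ᴴ = 1 :=
  Unitary.coe_mul_star_self h.eigenvectorUnitary
lemma U_aux' {X : Matrix (Fin n) (Fin n) ℂ} (h : X.IsHermitian) :
    (h.eigenvectorUnitary : Matrix (Fin n) (Fin n) ℂ)ᴴ *
      (h.eigenvectorUnitary : Matrix (Fin n) (Fin n) ℂ) = 1 :=
  Unitary.coe_star_mul_self h.eigenvectorUnitary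

lemma res_mul {X : Matrix (Fin n) (Fin n) ℂ} (h : X.IsHermitian) (hp : ∀ k, 0 < h.eigenvalues k)
    (t : ℝ) (ht : 0 ≤ t) :
    ((t : ℂ) • (1 : Matrix (Fin n) (Fin n) ℂ) + X) * 
    ((h.eigenvectorUnitary : Matrix (Fin n) (Fin n) ℂ) *
      Matrix.diagonal (fun i => (((t + h.eigenvalues i)⁻¹ : ℝ) : ℂ)) *
      (h.eigenvectorUnitary : Matrix (Fin n) (Fin n) ℂ)ᴴ) = 1 := by
  have e : (t : ℂ) • (1 : Matrix (Fin n) (Fin n) ℂ) + X = 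
    (h.eigenvectorUnitary : Matrix (Fin n) (Fin n) ℂ) *
      Matrix.diagonal (fun i => (((t + h.eigenvalues i) : ℝ) : ℂ)) *
      (h.eigenvectorUnitary : Matrix (Fin n) (Fin n) ℂ)ᴴ := by
    have : Matrix.diagonal (fun i => (((t + h.eigenvalues i) : ℝ) : ℂ)) = 
      (t : ℂ) • (1 : Matrix (Fin n) (Fin n) ℂ) + Matrix.diagonal (fun i => ((h.eigenvalues i : ℝ) : ℂ)) := by
      rw [Matrix.smul_one_eq_diagonal, Matrix.diagonal_add]
      simp
    rw [this, mul_add, add_mul, ← spec_aux h]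
    simp [U_aux h]
  rw [e]
  set U := (h.eigenvectorUnitary : Matrix (Fin n) (Fin n) ℂ) with hU
  have : ∀ D E : Matrix (Fin n) (Fin n) ℂ, U * D * Uᴴ * (U * E * Uᴴ) = U * (D * E) * Uᴴ := by
    intro D E
    calc _ = U * D * (Uᴴ * U) * E * Uᴴ := by simp only [mul_assoc]
      _ = _ := by rw [hU, U_aux' h]; simp only [mul_assoc, mul_one, one_mul]
  rw [this, Matrix.diagonal_mul_diagonal]
  have h1 : (fun i => (((t + h.eigenvalues i) : ℝ) : ℂ) * (((t + h.eigenvalues i)⁻¹ : ℝ) : ℂ)) = fun _ => 1 := by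
    funext i
    have := hp i
    rw [← Complex.ofReal_mul, mul_inv_cancel₀ (by positivity)]; simp
  rw [h1, Matrix.diagonal_one, mul_one, hU, U_aux h]

lemma entry_aux (U : Matrix (Fin n) (Fin n) ℂ) (d : Fin n → ℂ) (i j : Fin n) :
    (U * Matrix.diagonal d * Uᴴ) i j = ∑ k, U i k * d k * star (U j k) := by
  rw [Matrix.mul_apply]
  simp [Matrix.mul_diagonal]

lemma res_entry {X : Matrix (Fin n) (Fin n) ℂ} (h : X.IsHermitian) (hp : ∀ k, 0 < h.eigenvalues k)
    (t : ℝ) (ht : 0 ≤ t) (i j : Fin n) :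
    ((t : ℂ) • (1 : Matrix (Fin n) (Fin n) ℂ) + X)⁻¹ i j = 
    ∑ k, h.eigenvectorUnitary.1 i k * (((t + h.eigenvalues k)⁻¹ : ℝ) : ℂ) * star (h.eigenvectorUnitary.1 j k) := by
  rw [Matrix.inv_eq_right_inv (res_mul h hp t ht), entry_aux]

lemma res_bound {X : Matrix (Fin n) (Fin n) ℂ} (h : X.IsHermitian) (c : ℝ) (hc : 0 < c)
    (hp : ∀ k, c ≤ h.eigenvalues k)
    (t : ℝ) (ht : 0 ≤ t) (i j : Fin n) :
    ‖((t : ℂ) • (1 : Matrix (Fin n) (Fin n) ℂ) + X)⁻¹ i j‖ ≤ n * (t + c)⁻¹ := by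
  rw [res_entry h (fun k => hc.trans_le (hp k)) t ht]
  refine (norm_sum_le _ _).trans ?_
  have : ∀ k ∈ Finset.univ, ‖h.eigenvectorUnitary.1 i k * (((t + h.eigenvalues k)⁻¹ : ℝ) : ℂ) * star (h.eigenvectorUnitary.1 j k)‖ ≤ (t+c)⁻¹ := by
    intro k _
    have h1 := entry_norm_bound_of_unitary h.eigenvectorUnitary.2 i k
    have h2 := entry_norm_bound_of_unitary h.eigenvectorUnitary.2 j k
    have h3 := hp k
    have h4 : (t + h.eigenvalues k)⁻¹ ≤ (t+c)⁻¹ := inv_anti₀ (by positivity) (by linarith)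
    have h5 : 0 < (t + h.eigenvalues k)⁻¹ := inv_pos.2 (by linarith)
    rw [norm_mul, norm_mul, norm_star, Complex.norm_real, Real.norm_of_nonneg h5.le]
    calc _ ≤ 1 * (t + h.eigenvalues k)⁻¹ * 1 := by gcongr
      _ ≤ _ := by simpa using h4
  refine (Finset.sum_le_sum this).trans ?_
  simp

lemma mlog_int {X : Matrix (Fin n) (Fin n) ℂ} (h : X.IsHermitian) (hp : ∀ k, 0 < h.eigenvalues k)
    (i j : Fin n) :
    IntegrableOn (fun t : ℝ => (((1+t)⁻¹ : ℝ) : ℂ) * (1 : Matrix (Fin n) (Fin n) ℂ) i j 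
      - ((t : ℂ) • (1 : Matrix (Fin n) (Fin n) ℂ) + X)⁻¹ i j) (Set.Ioi 0) ∧
    ∫ t in Set.Ioi (0:ℝ), ((((1+t)⁻¹ : ℝ) : ℂ) * (1 : Matrix (Fin n) (Fin n) ℂ) i j 
      - ((t : ℂ) • (1 : Matrix (Fin n) (Fin n) ℂ) + X)⁻¹ i j) = mlog X i j := by
  have e : Set.EqOn (fun t : ℝ => (((1+t)⁻¹ : ℝ) : ℂ) * (1 : Matrix (Fin n) (Fin n) ℂ) i j 
      - ((t : ℂ) • (1 : Matrix (Fin n) (Fin n) ℂ) + X)⁻¹ i j)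
      (fun t => ∑ k, h.eigenvectorUnitary.1 i k * ((((1+t)⁻¹ - (t + h.eigenvalues k)⁻¹ : ℝ)) : ℂ) * star (h.eigenvectorUnitary.1 j k)) (Set.Ioi 0) := by
    intro t ht
    have ht : 0 < t := ht
    simp only
    rw [res_entry h hp t ht.le, ← U_aux h, Matrix.mul_apply, Finset.mul_sum, ← Finset.sum_sub_distrib]
    refine Finset.sum_congr rfl fun k _ => ?_
    rw [Matrix.conjTranspose_apply]
    push_cast
    ring
  have hi : ∀ k ∈ Finset.univ, IntegrableOn (fun t : ℝ => h.eigenvectorUnitary.1 i k * ((((1+t)⁻¹ - (t + h.eigenvalues k)⁻¹ : ℝ)) : ℂ) * star (h.eigenvectorUnitary.1 j k)) (Set.Ioi 0) := 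
    fun k _ => (((scal_aux _ (hp k)).1.ofReal).const_mul _).mul_const _
  refine ⟨(integrableOn_congr_fun e measurableSet_Ioi).2 (integrable_finsetSum _ hi), ?_⟩
  rw [setIntegral_congr_fun measurableSet_Ioi e, integral_finsetSum _ hi, mlog, dif_pos h, entry_aux]
  refine Finset.sum_congr rfl fun k _ => ?_
  rw [integral_mul_const, integral_const_mul, integral_complex_ofReal, (scal_aux _ (hp k)).2]

lemma psd_of_le {X : Matrix (Fin n) (Fin n) ℂ} (h : X.IsHermitian) (c : ℝ)
    (hp : ∀ k, c ≤ h.eigenvalues k) : (X - (c:ℂ) • 1).PosSemidef := by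
  have e : X - (c:ℂ) • 1 = (h.eigenvectorUnitary : Matrix (Fin n) (Fin n) ℂ) *
      Matrix.diagonal (fun i => ((h.eigenvalues i - c : ℝ) : ℂ)) *
      (h.eigenvectorUnitary : Matrix (Fin n) (Fin n) ℂ)ᴴ := by
    have : Matrix.diagonal (fun i => ((h.eigenvalues i - c : ℝ) : ℂ)) = 
      Matrix.diagonal (fun i => ((h.eigenvalues i : ℝ) : ℂ)) - (c : ℂ) • (1 : Matrix (Fin n) (Fin n) ℂ) := by
      rw [Matrix.smul_one_eq_diagonal, Matrix.diagonal_sub]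
      simp
    rw [this, mul_sub, sub_mul, ← spec_aux h]
    simp [U_aux h]
  rw [e]
  refine Matrix.PosSemidef.mul_mul_conjTranspose_same (Matrix.PosSemidef.diagonal ?_) _
  intro i
  simpa using hp i

lemma le_of_psd {X : Matrix (Fin n) (Fin n) ℂ} (h : X.IsHermitian) (c : ℝ)
    (hp : (X - (c:ℂ) • 1).PosSemidef) (k : Fin n) : c ≤ h.eigenvalues k := by
  have h1 := hp.conjTranspose_mul_mul_same (h.eigenvectorUnitary : Matrix (Fin n) (Fin n) ℂ)
  have h2 := h1.diag_nonneg (i := k)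
  have e : (h.eigenvectorUnitary : Matrix (Fin n) (Fin n) ℂ)ᴴ * (X - (c:ℂ) • 1) * 
     (h.eigenvectorUnitary : Matrix (Fin n) (Fin n) ℂ) = 
      Matrix.diagonal (fun i => ((h.eigenvalues i : ℝ) : ℂ)) - (c : ℂ) • 1 := by
    rw [mul_sub, sub_mul]
    congr 1
    · have e2 := congrArg (fun Y => (h.eigenvectorUnitary : Matrix (Fin n) (Fin n) ℂ)ᴴ * Y *
        (h.eigenvectorUnitary : Matrix (Fin n) (Fin n) ℂ)) (spec_aux h)
      refine e2.trans ?_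
      rw [← mul_assoc, ← mul_assoc, U_aux' h, one_mul, mul_assoc, U_aux' h, mul_one]
    · simp [U_aux' h]
  rw [e] at h2
  simp [← Complex.ofReal_sub] at h2
  exact h2

lemma unif_aux {ρ A : Matrix (Fin n) (Fin n) ℂ} (hρ : ρ.PosDef) (hA : A.IsHermitian) :
    ∃ c > 0, ∃ δ > 0, ∀ ε : ℝ, |ε| < δ → ∃ h : (ρ + ε • A).IsHermitian, ∀ k, c ≤ h.eigenvalues k := by
  obtain ⟨c, hc, hcl⟩ : ∃ c > 0, ∀ k, c ≤ hρ.1.eigenvalues k := by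
    have : ∀ᶠ c in 𝓝[>] (0:ℝ), ∀ k, c ≤ hρ.1.eigenvalues k :=
      eventually_all.2 fun k => nhdsWithin_le_nhds (eventually_le_nhds (hρ.eigenvalues_pos k))
    obtain ⟨c, h1, h2⟩ := (this.and self_mem_nhdsWithin).exists
    exact ⟨c, h2, h1⟩
  obtain ⟨M, hM, hMl⟩ : ∃ M > 0, ∀ k, |hA.eigenvalues k| ≤ M :=
    ⟨∑ k, |hA.eigenvalues k| + 1, by positivity, fun k => by
      have := Finset.single_le_sum (f := fun k => |hA.eigenvalues k|) (fun _ _ => abs_nonneg _) (Finset.mem_univ k)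
      linarith⟩
  refine ⟨c/2, by positivity, c/(2*M), by positivity, fun ε hε => ?_⟩
  have hεA : (ε • A).IsHermitian := by
    unfold Matrix.IsHermitian
    rw [Matrix.conjTranspose_smul, hA.eq]; simp
  have h : (ρ + ε • A).IsHermitian := hρ.1.add hεA
  refine ⟨h, fun k => le_of_psd h _ ?_ k⟩
  have hεM : |ε| * M ≤ c/2 := by
    rw [lt_div_iff₀ (by positivity)] at hε
    linarith
  have h1 := psd_of_le hρ.1 c hcl
  have h2 : (ε • A + ((|ε| * M : ℝ):ℂ) • 1).PosSemidef := by
    have e : ε • A + ((|ε| * M : ℝ):ℂ) • 1 = (hA.eigenvectorUnitary : Matrix (Fin n) (Fin n) ℂ) *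
      Matrix.diagonal (fun i => ((ε * hA.eigenvalues i + |ε| * M : ℝ) : ℂ)) *
      (hA.eigenvectorUnitary : Matrix (Fin n) (Fin n) ℂ)ᴴ := by
      have : Matrix.diagonal (fun i => ((ε * hA.eigenvalues i + |ε| * M : ℝ) : ℂ)) = 
        ε • Matrix.diagonal (fun i => ((hA.eigenvalues i : ℝ) : ℂ)) + ((|ε| * M : ℝ) : ℂ) • (1 : Matrix (Fin n) (Fin n) ℂ) := by
        rw [Matrix.smul_one_eq_diagonal, ← Matrix.diagonal_smul, Matrix.diagonal_add]
        simp
      rw [this, mul_add, add_mul, mul_smul_comm, smul_mul_assoc, ← spec_aux hA]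
      simp [U_aux hA]
    rw [e]
    refine Matrix.PosSemidef.mul_mul_conjTranspose_same (Matrix.PosSemidef.diagonal ?_) _
    intro i
    have h3 : |ε * hA.eigenvalues i| ≤ |ε| * M := by
      rw [abs_mul]; gcongr; exact hMl i
    have := neg_abs_le (ε * hA.eigenvalues i)
    simp only [Pi.zero_apply]
    exact Complex.zero_le_real.2 (by linarith)
  have h3 : (((c/2 - |ε| * M : ℝ) : ℂ) • (1 : Matrix (Fin n) (Fin n) ℂ)).PosSemidef := by
    rw [Matrix.smul_one_eq_diagonal]
    refine Matrix.PosSemidef.diagonal ?_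
    intro i
    exact Complex.zero_le_real.2 (by linarith)
  have := (h1.add h2).add h3
  convert this using 1
  push_cast
  module

lemma meas_inv {M : ℝ → Matrix (Fin n) (Fin n) ℂ} (hM : Continuous M) (i j : Fin n) :
    Measurable (fun t => (M t)⁻¹ i j) := by
  simp only [Matrix.inv_def, Ring.inverse_eq_inv', Matrix.smul_apply, smul_eq_mul]
  exact (hM.matrix_det.measurable.inv).mul (hM.matrix_adjugate.matrix_elem i j).measurable

lemma cont_inv {M : ℝ → Matrix (Fin n) (Fin n) ℂ} (hM : Continuous M) (h0 : (M 0).det ≠ 0) (i j : Fin n) :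
    ContinuousAt (fun t => (M t)⁻¹ i j) 0 := by
  simp only [Matrix.inv_def, Ring.inverse_eq_inv', Matrix.smul_apply, smul_eq_mul]
  exact (hM.matrix_det.continuousAt.inv₀ h0).mul (hM.matrix_adjugate.matrix_elem i j).continuousAt

lemma ent (P A Q : Matrix (Fin n) (Fin n) ℂ) (i j : Fin n) :
    (P * A * Q) i j = ∑ l, (∑ k, P i k * A k l) * Q l j := by
  simp [Matrix.mul_apply]

lemma prod_bound (P A Q : Matrix (Fin n) (Fin n) ℂ) (b : ℝ) (hb : 0 ≤ b) (hP : ∀ i j, ‖P i j‖ ≤ b)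
    (hQ : ∀ i j, ‖Q i j‖ ≤ b) (i j : Fin n) :
    ‖(P * A * Q) i j‖ ≤ (∑ l, ∑ k, ‖A k l‖) * b^2 := by
  rw [ent, Finset.sum_mul]
  refine norm_sum_le_of_le _ fun l _ => ?_
  rw [norm_mul, pow_two, ← mul_assoc]
  have : ‖∑ k, P i k * A k l‖ ≤ (∑ k, ‖A k l‖) * b := by
    rw [Finset.sum_mul]
    refine norm_sum_le_of_le _ fun k _ => ?_
    rw [norm_mul, mul_comm]
    gcongr
    exact hP i k
  gcongr
  exact hQ l j

end aux

/-- **Derivative of the matrix logarithm.**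
For `ρ` positive definite and `A` Hermitian, the map `ε ↦ log(ρ + ε·A)` is differentiable
at `ε = 0` with derivative `∫₀^∞ (t·I + ρ)⁻¹ A (t·I + ρ)⁻¹ dt`, a convergent improper
Bochner integral (stated entrywise). -/
theorem mlog_hasDerivAt
    (n : ℕ) (hn : 1 ≤ n) (ρ : Matrix (Fin n) (Fin n) ℂ) (hρ : ρ.PosDef)
    (A : Matrix (Fin n) (Fin n) ℂ) (hA : A.IsHermitian) :
    (∀ i j, MeasureTheory.IntegrableOn
      (fun t : ℝ =>
        (((t : ℂ) • (1 : Matrix (Fin n) (Fin n) ℂ) + ρ)⁻¹ * A * ((t : ℂ) • 1 + ρ)⁻¹) i j)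
      (Set.Ioi 0)) ∧
    (∀ i j, HasDerivAt (fun ε : ℝ => mlog (ρ + ε • A) i j)
      (∫ t in Set.Ioi (0:ℝ),
        (((t : ℂ) • (1 : Matrix (Fin n) (Fin n) ℂ) + ρ)⁻¹ * A * ((t : ℂ) • 1 + ρ)⁻¹) i j)
      0) := by
  obtain ⟨c, hc, δ, hδ, H⟩ := unif_aux hρ hA
  obtain ⟨h0, hp0⟩ := H 0 (by simpa using hδ)
  simp only [zero_smul, add_zero] at h0 hp0
  have hcont : ∀ X : Matrix (Fin n) (Fin n) ℂ, Continuous fun t : ℝ => (t : ℂ) • (1 : Matrix (Fin n) (Fin n) ℂ) + X := by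
    intro X
    fun_prop
  have hmeas : ∀ X Y : Matrix (Fin n) (Fin n) ℂ, ∀ i j, Measurable (fun t : ℝ =>
        (((t : ℂ) • (1 : Matrix (Fin n) (Fin n) ℂ) + X)⁻¹ * A * ((t : ℂ) • 1 + Y)⁻¹) i j) := by
    intro X Y i j
    simp only [ent]
    exact Finset.measurable_fun_sum _ fun l _ => (Finset.measurable_fun_sum _ fun k _ =>
      (meas_inv (hcont X) i k).mul_const _).mul (meas_inv (hcont Y) l j)
  have hbd : ∀ ε : ℝ, |ε| < δ → ∀ t : ℝ, 0 < t → ∀ i j, 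
      ‖(((t : ℂ) • (1 : Matrix (Fin n) (Fin n) ℂ) + ρ)⁻¹ * A * ((t : ℂ) • 1 + (ρ + ε • A))⁻¹) i j‖ ≤
        (∑ l, ∑ k, ‖A k l‖) * (n * (t + c)⁻¹)^2 := by
    intro ε hε t ht i j
    obtain ⟨h, hp⟩ := H ε hε
    exact prod_bound _ _ _ _ (by positivity) (res_bound h0 c hc hp0 t ht.le) 
      (res_bound h c hc hp t ht.le) i j
  have hbi : IntegrableOn (fun t : ℝ => (∑ l, ∑ k, ‖A k l‖) * (n * (t + c)⁻¹)^2) (Set.Ioi 0) := by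
    simp only [mul_pow]
    exact ((scal_sq c hc).const_mul _).const_mul _
  refine ⟨fun i j => ?_, fun i j => ?_⟩
  · refine Integrable.mono' hbi (hmeas ρ ρ i j).aestronglyMeasurable ?_
    refine (ae_restrict_iff' measurableSet_Ioi).2 (ae_of_all _ fun t ht => ?_)
    simpa using hbd 0 (by simpa using hδ) t ht i j
  rw [hasDerivAt_iff_tendsto_slope]
  have hev : ∀ᶠ ε : ℝ in 𝓝[≠] 0, |ε| < δ := by
    refine nhdsWithin_le_nhds ?_
    have := (continuous_abs (G := ℝ)).tendsto 0
    exact this.eventually (gt_mem_nhds (by simpa using hδ))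
  have hT : Tendsto (fun ε : ℝ => ∫ t in Set.Ioi (0:ℝ), 
      (((t : ℂ) • (1 : Matrix (Fin n) (Fin n) ℂ) + ρ)⁻¹ * A * ((t : ℂ) • 1 + (ρ + ε • A))⁻¹) i j)
      (𝓝[≠] 0) (𝓝 (∫ t in Set.Ioi (0:ℝ),
        (((t : ℂ) • (1 : Matrix (Fin n) (Fin n) ℂ) + ρ)⁻¹ * A * ((t : ℂ) • 1 + ρ)⁻¹) i j)) := by
    refine tendsto_integral_filter_of_dominated_convergence _ 
      (Eventually.of_forall fun ε => (hmeas ρ _ i j).aestronglyMeasurable) ?_ hbi ?_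
    · filter_upwards [hev] with ε hε
      exact (ae_restrict_iff' measurableSet_Ioi).2 (ae_of_all _ fun t ht => hbd ε hε t ht i j)
    · refine (ae_restrict_iff' measurableSet_Ioi).2 (ae_of_all _ fun t ht => ?_)
      have ht : 0 < t := ht
      refine Tendsto.mono_left ?_ nhdsWithin_le_nhds
      simp only [ent]
      refine tendsto_finsetSum _ fun l _ => Tendsto.const_mul _ ?_
      have hc' : Continuous fun ε : ℝ => (t : ℂ) • (1 : Matrix (Fin n) (Fin n) ℂ) + (ρ + ε • A) := by
        fun_prop
      have := cont_inv hc' (by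
        simp only [zero_smul, add_zero]
        exact Matrix.det_ne_zero_of_right_inverse (res_mul h0 (fun k => hc.trans_le (hp0 k)) t ht.le)) l j
      simpa [ContinuousAt] using this
  refine hT.congr' ?_
  filter_upwards [hev, self_mem_nhdsWithin] with ε hε hε0
  have hε0 : ε ≠ 0 := hε0
  obtain ⟨h, hp⟩ := H ε hε
  have hp' := fun k => hc.trans_le (hp k)
  have hp0' := fun k => hc.trans_le (hp0 k)
  obtain ⟨i1, e1⟩ := mlog_int h hp' i j
  obtain ⟨i0, e0⟩ := mlog_int h0 hp0' i j
  rw [slope_def_module]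
  simp only [zero_smul, add_zero, sub_zero]
  rw [← e1, ← e0, ← integral_sub i1 i0, ← integral_smul]
  refine setIntegral_congr_fun measurableSet_Ioi fun t ht => ?_
  have ht : 0 < t := ht
  set P := (t : ℂ) • (1 : Matrix (Fin n) (Fin n) ℂ) + ρ with hP
  set Q := (t : ℂ) • (1 : Matrix (Fin n) (Fin n) ℂ) + (ρ + ε • A) with hQ
  have uP : IsUnit P.det := (Matrix.det_ne_zero_of_right_inverse (res_mul h0 hp0' t ht.le)).isUnit
  have uQ : IsUnit Q.det := (Matrix.det_ne_zero_of_right_inverse (res_mul h hp' t ht.le)).isUnit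
  have hA' : A = ε⁻¹ • (Q - P) := by
    have : Q - P = ε • A := by rw [hP, hQ]; abel
    rw [this, smul_smul, inv_mul_cancel₀ hε0, one_smul]
  have key : P⁻¹ * A * Q⁻¹ = ε⁻¹ • (P⁻¹ - Q⁻¹) := by
    conv_lhs => rw [hA']
    rw [mul_smul_comm, smul_mul_assoc, mul_sub, sub_mul, mul_assoc, Matrix.mul_nonsing_inv _ uQ,
      Matrix.nonsing_inv_mul _ uP, mul_one, one_mul]
  rw [key, Matrix.smul_apply, Matrix.sub_apply]
  congr 1
  ring
end

section
/- Let n ≥ 1, let σ, ρ ∈ Matrix (Fin n) (Fin n) ℂ be positive definite with Tr σ = 1 and Tr ρ = 1, and let A ∈ Matrix (Fin n) (Fin n) ℂ be Hermitian with Tr A = 0. Define H_σ(τ) := Re Tr[τ·(log τ − log σ)] for positive definite τ with Tr τ = 1. Then the map ε ↦ H_σ(ρ + ε·A) (defined for all sufficiently small real ε) is differentiable at ε = 0 with derivative Re Tr[(log ρ − log σ)·A]. -/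
open scoped ComplexOrder Matrix

/-- The von Neumann relative entropy `H_σ(τ) := Re Tr[τ (log τ − log σ)]`. -/
noncomputable def vonNeumannRelEnt {n : ℕ} (σ τ : Matrix (Fin n) (Fin n) ℂ) : ℝ :=
  ((τ * (mlog τ - mlog σ)).trace).re

lemma scal (x y : ℝ) (hy : 0 < y) :
    |x * (Real.log x - Real.log y) - (x - y)| ≤ 2 * (x^2 * y⁻¹ - 2 * x + y) := by
  have key : ∀ t : ℝ, 0 < t → t * (Real.log t - Real.log y) ≤ t^2 * y⁻¹ - t ∧
      t - y ≤ t * (Real.log t - Real.log y) := by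
    intro t ht
    have h1 := Real.log_le_sub_one_of_pos (div_pos ht hy)
    have h2 := Real.log_le_sub_one_of_pos (div_pos hy ht)
    rw [Real.log_div ht.ne' hy.ne'] at h1
    rw [Real.log_div hy.ne' ht.ne'] at h2
    have h1' := mul_le_mul_of_nonneg_left h1 ht.le
    have h2' := mul_le_mul_of_nonneg_left h2 ht.le
    have e1 : t * (t / y - 1) = t^2 * y⁻¹ - t := by field_simp
    have e2 : t * (y / t - 1) = y - t := by field_simp
    constructor <;> linarith
  have hsq : x^2 * y⁻¹ - 2 * x + y = (x - y)^2 * y⁻¹ := by field_simp; ring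
  have hnn : 0 ≤ (x - y)^2 * y⁻¹ := by positivity
  have hx2 : 0 ≤ x^2 * y⁻¹ := by positivity
  rw [abs_le]
  rcases lt_trichotomy x 0 with hx | hx | hx
  · obtain ⟨a, b⟩ := key (-x) (by linarith)
    rw [Real.log_neg_eq_log, neg_sq] at a
    rw [Real.log_neg_eq_log] at b
    constructor <;> linarith
  · subst hx
    constructor <;> simp <;> linarith
  · obtain ⟨a, b⟩ := key x hx
    constructor <;> linarith

noncomputable def FF {n : ℕ} (U : Matrix (Fin n) (Fin n) ℂ) (f : Fin n → ℝ) :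
    Matrix (Fin n) (Fin n) ℂ :=
  U * Matrix.diagonal (fun i => ((f i : ℝ) : ℂ)) * Uᴴ

lemma FF_mul {n : ℕ} (U : Matrix (Fin n) (Fin n) ℂ) (hU : Uᴴ * U = 1) (f g : Fin n → ℝ) :
    FF U f * FF U g = FF U (fun i => f i * g i) := by
  unfold FF
  calc _ = U * Matrix.diagonal (fun i => ((f i : ℝ) : ℂ)) * (Uᴴ * U) *
        Matrix.diagonal (fun i => ((g i : ℝ) : ℂ)) * Uᴴ := by simp only [Matrix.mul_assoc]
    _ = _ := by
      rw [hU, Matrix.mul_one, Matrix.mul_assoc U, Matrix.diagonal_mul_diagonal]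
      simp

lemma FF_one {n : ℕ} (U : Matrix (Fin n) (Fin n) ℂ) (hU : U * Uᴴ = 1) :
    FF U (fun _ => 1) = 1 := by
  simp [FF, hU]

lemma FF_trace {n : ℕ} (U V : Matrix (Fin n) (Fin n) ℂ) (f g : Fin n → ℝ) :
    (FF U f * FF V g).trace.re =
      ∑ i, ∑ j, f i * g j * Complex.normSq ((Uᴴ * V) i j) := by
  have : (FF U f * FF V g).trace =
      (Matrix.diagonal (fun i => ((f i : ℝ) : ℂ)) * (Uᴴ * V) *
        (Matrix.diagonal (fun i => ((g i : ℝ) : ℂ)) * (Uᴴ * V)ᴴ)).trace := by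
    rw [Matrix.conjTranspose_mul, Matrix.conjTranspose_conjTranspose]
    unfold FF
    rw [Matrix.mul_assoc, Matrix.mul_assoc, Matrix.trace_mul_comm]
    simp only [Matrix.mul_assoc]
  rw [this, Matrix.trace, Complex.re_sum]
  refine Finset.sum_congr rfl fun i _ => ?_
  rw [Matrix.diag_apply, Matrix.mul_apply, Complex.re_sum]
  refine Finset.sum_congr rfl fun j _ => ?_
  rw [Matrix.diagonal_mul, Matrix.diagonal_mul, Matrix.conjTranspose_apply]
  generalize (Uᴴ * V) i j = w
  simp [Complex.normSq_apply]
  ring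

lemma FF_klein {n : ℕ} (U V : Matrix (Fin n) (Fin n) ℂ)
    (hU : Uᴴ * U = 1) (hU' : U * Uᴴ = 1) (hV' : V * Vᴴ = 1)
    (x y : Fin n → ℝ) (hy : ∀ i, 0 < y i) :
    |(FF U x * (FF U (fun i => Real.log (x i)) - FF V (fun i => Real.log (y i)))).trace.re
      - ((FF U x).trace.re - (FF V y).trace.re)| ≤
    2 * ((FF U x * FF U x * FF V (fun i => (y i)⁻¹)).trace.re - 2 * (FF U x).trace.re
      + (FF V y).trace.re) := by
  have e1 : (FF U x).trace.re = ∑ i, ∑ j, x i * 1 * Complex.normSq ((Uᴴ * V) i j) := by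
    rw [← FF_trace U V x (fun _ => 1), FF_one V hV', Matrix.mul_one]
  have e2 : (FF V y).trace.re = ∑ i, ∑ j, 1 * y j * Complex.normSq ((Uᴴ * V) i j) := by
    rw [← FF_trace U V (fun _ => 1) y, FF_one U hU', Matrix.one_mul]
  have e3 : (FF U x * FF U (fun i => Real.log (x i))).trace.re =
      ∑ i, ∑ j, (x i * Real.log (x i)) * 1 * Complex.normSq ((Uᴴ * V) i j) := by
    rw [← FF_trace U V (fun i => x i * Real.log (x i)) (fun _ => 1), FF_one V hV',
      Matrix.mul_one, FF_mul U hU]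
  rw [Matrix.mul_sub, Matrix.trace_sub, Complex.sub_re, e3, FF_mul U hU x x, FF_trace, FF_trace,
    e1, e2]
  simp only [Finset.mul_sum, ← Finset.sum_sub_distrib, ← Finset.sum_add_distrib]
  refine (Finset.abs_sum_le_sum_abs _ _).trans (Finset.sum_le_sum fun i _ => ?_)
  refine (Finset.abs_sum_le_sum_abs _ _).trans (Finset.sum_le_sum fun j _ => ?_)
  have h := mul_le_mul_of_nonneg_right (scal (x i) (y j) (hy j))
    (Complex.normSq_nonneg ((Uᴴ * V) i j))
  rw [← abs_of_nonneg (Complex.normSq_nonneg ((Uᴴ * V) i j)), ← abs_mul,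
    abs_of_nonneg (Complex.normSq_nonneg ((Uᴴ * V) i j))] at h
  convert h using 1
  · congr 1; ring
  · ring

lemma FF_spec {n : ℕ} (X : Matrix (Fin n) (Fin n) ℂ) (h : X.IsHermitian) :
    X = FF (h.eigenvectorUnitary : Matrix (Fin n) (Fin n) ℂ) h.eigenvalues := by
  have := h.spectral_theorem
  rw [Unitary.conjStarAlgAut_apply] at this
  exact this

lemma FF_log {n : ℕ} (X : Matrix (Fin n) (Fin n) ℂ) (h : X.IsHermitian) :
    mlog X = FF (h.eigenvectorUnitary : Matrix (Fin n) (Fin n) ℂ)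
      (fun i => Real.log (h.eigenvalues i)) := by
  rw [mlog, dif_pos h]; rfl

lemma klein {n : ℕ} (Y : Matrix (Fin n) (Fin n) ℂ) (hY : Y.PosDef) :
    ∃ B : Matrix (Fin n) (Fin n) ℂ, Y * B = 1 ∧ ∀ X : Matrix (Fin n) (Fin n) ℂ, X.IsHermitian →
      |(X * (mlog X - mlog Y)).trace.re - (X.trace.re - Y.trace.re)| ≤
        2 * ((X * X * B).trace.re - 2 * X.trace.re + Y.trace.re) := by
  have hYh := hY.isHermitian
  have hV := Unitary.coe_star_mul_self hYh.eigenvectorUnitary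
  have hV' := Unitary.coe_mul_star_self hYh.eigenvectorUnitary
  refine ⟨FF (hYh.eigenvectorUnitary : Matrix (Fin n) (Fin n) ℂ)
    (fun i => (hYh.eigenvalues i)⁻¹), ?_, ?_⟩
  · refine (congrArg (· * _) (FF_spec Y hYh)).trans ?_
    beta_reduce
    rw [FF_mul _ hV, ← FF_one _ hV']
    congr 1
    funext i
    exact mul_inv_cancel₀ (hY.eigenvalues_pos i).ne'
  · intro X hX
    have := FF_klein _ _ (Unitary.coe_star_mul_self hX.eigenvectorUnitary)
      (Unitary.coe_mul_star_self hX.eigenvectorUnitary) hV' hX.eigenvalues hYh.eigenvalues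
      hY.eigenvalues_pos
    rw [← FF_spec X hX, ← FF_log X hX, ← FF_spec Y hYh, ← FF_log Y hYh] at this
    exact this

/-- **Derivative of the von Neumann relative entropy.**
For positive definite states `σ, ρ` of trace one and traceless Hermitian `A`, the map
`ε ↦ H_σ(ρ + ε·A)` is differentiable at `ε = 0` with derivative
`Re Tr[(log ρ − log σ) A]`. -/
theorem relEnt_hasDerivAt
    (n : ℕ) (hn : 1 ≤ n)
    (σ ρ : Matrix (Fin n) (Fin n) ℂ) (hσ : σ.PosDef) (hρ : ρ.PosDef)
    (hσtr : σ.trace = 1) (hρtr : ρ.trace = 1)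
    (A : Matrix (Fin n) (Fin n) ℂ) (hA : A.IsHermitian) (hAtr : A.trace = 0) :
    HasDerivAt (fun ε : ℝ => vonNeumannRelEnt σ (ρ + ε • A))
      (((mlog ρ - mlog σ) * A).trace.re) 0 := by
  obtain ⟨B, hB, hK⟩ := klein ρ hρ
  have hB' : B * ρ = 1 := mul_eq_one_comm.mp hB
  rw [hasDerivAt_iff_isLittleO]
  refine Asymptotics.IsBigO.trans_isLittleO (g := fun ε : ℝ => (ε - 0)^2) ?_ ?_
  · refine Asymptotics.IsBigO.of_bound (2 * (A * A * B).trace.re) (Filter.Eventually.of_forall ?_)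
    intro ε
    have hX : (ρ + ε • A).IsHermitian :=
      hρ.isHermitian.add (hA.smul (IsSelfAdjoint.all ε))
    have h := hK _ hX
    have t1 : (ρ + ε • A).trace = 1 := by simp [hAtr, hρtr]
    have t2 : ((ρ + ε • A) * (ρ + ε • A) * B).trace.re = 1 + ε^2 * (A * A * B).trace.re := by
      have c1 : (ρ * A * B).trace = 0 := by
        rw [Matrix.trace_mul_comm, ← Matrix.mul_assoc, hB', Matrix.one_mul, hAtr]
      have c2 : (A * ρ * B).trace = 0 := by
        rw [Matrix.mul_assoc, hB, Matrix.mul_one, hAtr]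
      have c3 : (ρ * ρ * B).trace = 1 := by
        rw [Matrix.mul_assoc, hB, Matrix.mul_one, hρtr]
      simp only [Matrix.add_mul, Matrix.mul_add, Matrix.smul_mul, Matrix.mul_smul,
        Matrix.trace_add, Matrix.trace_smul, c1, c2, c3]
      simp
      ring
    rw [t1, t2, hρtr] at h
    rw [Real.norm_eq_abs, Real.norm_eq_abs, abs_of_nonneg (sq_nonneg (ε - 0))]
    convert h using 1
    · congr 1
      simp only [vonNeumannRelEnt, zero_smul, add_zero, Matrix.mul_sub, Matrix.sub_mul,
        Matrix.add_mul, Matrix.trace_add, Matrix.trace_sub, Matrix.smul_mul, Matrix.trace_smul,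
        Complex.sub_re, Complex.add_re, Complex.smul_re, smul_eq_mul,
        Matrix.trace_mul_comm (mlog ρ) A, Matrix.trace_mul_comm (mlog σ) A]
      ring
    · simp; ring
  · have := Asymptotics.isLittleO_pow_sub_sub (0 : ℝ) (m := 2) (by norm_num)
    simpa using this
end

section
/- Let n ≥ 1, let σ ∈ Matrix (Fin n) (Fin n) ℂ be positive definite with Tr σ = 1, and let A, B ∈ Matrix (Fin n) (Fin n) ℂ be Hermitian with Tr A = Tr B = 0. Define H_σ(τ) := Re Tr[τ·(log τ − log σ)]. Then the second mixed derivative ∂_ε ∂_η |_{ε=η=0} H_σ(σ + ε·A + η·B) exists and equals ∫₀^∞ Re Tr[(s·I + σ)⁻¹ · A · (s·I + σ)⁻¹ · B] ds; i.e. the Hessian of the von Neumann relative entropy H_σ at its minimum σ, evaluated on traceless Hermitian directions A and B, is the BKM-tilde pairing ⟨A,B⟩_BKM~ := Re Tr[A · ∫₀^∞ (s·I+σ)⁻¹ B (s·I+σ)⁻¹ ds]. -/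
open scoped ComplexOrder Matrix Topology

open MeasureTheory

section helpers

attribute [-instance] instTopologicalSpaceMatrix Matrix.instUniformSpace NormedSpace.complexToReal
attribute [local instance] Matrix.linftyOpNormedRing Matrix.linftyOpNormedAlgebra

variable {n : ℕ}

theorem aux_spec (τ : Matrix (Fin n) (Fin n) ℂ) (h : τ.IsHermitian) :
    ∃ (l : Fin n → ℝ) (P : Fin n → Matrix (Fin n) (Fin n) ℂ),
      (τ.PosDef → ∀ i, 0 < l i) ∧ (∀ i j, P i * P j = if i = j then P i else 0) ∧
      ∑ i, P i = 1 ∧ τ = ∑ i, (l i : ℂ) • P i ∧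
      mlog τ = ∑ i, ((Real.log (l i) : ℝ) : ℂ) • P i ∧ (∀ i, (P i).PosSemidef) ∧
      (∀ d : Fin n → ℝ, (∀ i, 0 < d i) → (∑ i, (d i : ℂ) • P i).PosDef) := by
  set U : Matrix (Fin n) (Fin n) ℂ :=
    (h.eigenvectorUnitary : Matrix (Fin n) (Fin n) ℂ) with hU
  have h1 : Uᴴ * U = 1 := by
    have := Unitary.coe_star_mul_self h.eigenvectorUnitary
    simpa [Matrix.star_eq_conjTranspose] using this
  have h2 : U * Uᴴ = 1 := by
    have := Unitary.coe_mul_star_self h.eigenvectorUnitary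
    simpa [Matrix.star_eq_conjTranspose] using this
  have key : ∀ d : Fin n → ℂ, U * Matrix.diagonal d * Uᴴ =
      ∑ i, d i • (U * Matrix.diagonal (Pi.single i 1) * Uᴴ) := by
    intro d
    have : Matrix.diagonal d = ∑ i, d i • Matrix.diagonal (Pi.single i (1:ℂ)) := by
      ext a b
      by_cases hab : a = b
      · subst hab; simp [Matrix.sum_apply, Pi.single_apply]
      · simp [Matrix.sum_apply, hab]
    rw [this]
    simp [Finset.mul_sum, Finset.sum_mul]
  refine ⟨h.eigenvalues, fun i => U * Matrix.diagonal (Pi.single i 1) * Uᴴ,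
    fun hp i => hp.eigenvalues_pos i, ?_, ?_, ?_, ?_, ?_, ?_⟩
  · intro i j
    have : U * Matrix.diagonal (Pi.single i (1:ℂ)) * Uᴴ * (U * Matrix.diagonal (Pi.single j 1) * Uᴴ)
      = U * (Matrix.diagonal (Pi.single i (1:ℂ)) * Matrix.diagonal (Pi.single j 1)) * Uᴴ := by
      calc _ = U * Matrix.diagonal (Pi.single i (1:ℂ)) * (Uᴴ * U) * Matrix.diagonal (Pi.single j 1) * Uᴴ := by
            simp only [Matrix.mul_assoc]
        _ = _ := by rw [h1]; simp only [Matrix.mul_assoc, Matrix.one_mul]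
    simp only [this, Matrix.diagonal_mul_diagonal]
    split_ifs with hij
    · subst hij
      congr 3
      ext a; by_cases ha : a = i <;> simp [Pi.single_apply, ha]
    · have : (fun a => (Pi.single i (1:ℂ) : Fin n → ℂ) a * (Pi.single j (1:ℂ) : Fin n → ℂ) a) = 0 := by
        ext a
        by_cases ha : a = i
        · subst ha; simp [Pi.single_apply, hij]
        · simp [Pi.single_apply, ha]
      rw [this]; simp
  · have := key (fun _ => 1)
    simp only [one_smul] at this
    rw [← this, Matrix.diagonal_one, Matrix.mul_one, h2]
  · have := h.spectral_theorem
    rw [← key (fun i => (h.eigenvalues i : ℂ))]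
    conv_lhs => rw [this]
    simp [Unitary.conjStarAlgAut_apply, Matrix.star_eq_conjTranspose, hU, Function.comp_def]
  · rw [← key (fun i => ((Real.log (h.eigenvalues i) : ℝ) : ℂ))]
    simp [mlog, h, hU]
  · intro i
    refine Matrix.PosSemidef.mul_mul_conjTranspose_same ?_ U
    rw [Matrix.posSemidef_diagonal_iff]
    intro a; by_cases ha : a = i <;> simp [Pi.single_apply, ha]
  · intro d hd
    rw [← key (fun i => (d i : ℂ))]
    have hdiag : (Matrix.diagonal (fun i => (d i : ℂ))).PosDef := by
      rw [Matrix.posDef_diagonal_iff]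
      intro i; exact_mod_cast hd i
    refine hdiag.mul_mul_conjTranspose_same (B := U) ?_
    intro x y hxy
    have := congrArg (fun v => Matrix.vecMul v Uᴴ) hxy
    simpa [Matrix.vecMul_vecMul, h2] using this

theorem aux_open (τ X : Matrix (Fin n) (Fin n) ℂ) (h : τ.PosDef) (hX : X.IsHermitian) :
    ∀ᶠ t in 𝓝 (0:ℝ), (τ + t • X).PosDef := by
  obtain ⟨l, P, hl, hPP, hP1, hτ, -, hps, hpd⟩ := aux_spec τ h.1
  obtain ⟨m, Q, -, -, hQ1, hXe, -, -, hqd⟩ := aux_spec X hX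
  have hl := hl h
  obtain ⟨c, hc, hcl⟩ : ∃ c : ℝ, 0 < c ∧ ∀ i, c < l i := by
    have : ∀ᶠ c in 𝓝[>] (0:ℝ), 0 < c ∧ ∀ i, c < l i := by
      refine Filter.Eventually.and (eventually_mem_nhdsWithin) ?_
      rw [Filter.eventually_all]
      intro i
      exact nhdsWithin_le_nhds (Iio_mem_nhds (hl i))
    exact this.exists
  have ev : ∀ᶠ t in 𝓝 (0:ℝ), ∀ i, 0 < c + t * m i := by
    rw [Filter.eventually_all]
    intro i
    have : Filter.Tendsto (fun t : ℝ => c + t * m i) (𝓝 0) (𝓝 (c + 0 * m i)) :=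
      (Continuous.tendsto (by fun_prop) 0)
    exact this.eventually (lt_mem_nhds (by simpa using hc))
  filter_upwards [ev] with t ht
  have e : τ + t • X = (∑ i, ((l i - c : ℝ) : ℂ) • P i) + ∑ i, ((c + t * m i : ℝ) : ℂ) • Q i := by
    push_cast
    simp only [sub_smul, add_smul, Finset.sum_sub_distrib, Finset.sum_add_distrib, mul_smul,
      ← Finset.smul_sum, ← hτ, ← hXe, hP1, hQ1]
    rw [Complex.coe_smul]
    abel
  rw [e]
  exact (hpd _ (fun i => by linarith [hcl i])).add (hqd _ ht)

/-- resolvent -/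
noncomputable def Rs (τ : Matrix (Fin n) (Fin n) ℂ) (s : ℝ) : Matrix (Fin n) (Fin n) ℂ :=
  ((s : ℂ) • (1 : Matrix (Fin n) (Fin n) ℂ) + τ)⁻¹

theorem aux_R (τ : Matrix (Fin n) (Fin n) ℂ) (l : Fin n → ℝ)
    (P : Fin n → Matrix (Fin n) (Fin n) ℂ) (hl : ∀ i, 0 < l i)
    (hPP : ∀ i j, P i * P j = if i = j then P i else 0) (hP1 : ∑ i, P i = 1)
    (hτ : τ = ∑ i, (l i : ℂ) • P i) (s : ℝ) (hs : 0 < s) :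
    Rs τ s = ∑ i, (((s + l i)⁻¹ : ℝ) : ℂ) • P i ∧
      Rs τ s * ((s : ℂ) • (1 : Matrix (Fin n) (Fin n) ℂ) + τ) = 1 ∧
      ((s : ℂ) • (1 : Matrix (Fin n) (Fin n) ℂ) + τ) * Rs τ s = 1 := by
  have e : (s : ℂ) • (1 : Matrix (Fin n) (Fin n) ℂ) + τ = ∑ i, ((s + l i : ℝ) : ℂ) • P i := by
    push_cast
    simp only [add_smul, Finset.sum_add_distrib, ← Finset.smul_sum, hP1, ← hτ]
  have e2 : (∑ i, (((s + l i)⁻¹ : ℝ) : ℂ) • P i) *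
      ((s : ℂ) • (1 : Matrix (Fin n) (Fin n) ℂ) + τ) = 1 := by
    rw [e, Finset.sum_mul_sum, ← hP1]
    refine Finset.sum_congr rfl fun i _ => ?_
    simp only [smul_mul_smul_comm, hPP, smul_ite, smul_zero, Finset.sum_ite_eq, Finset.mem_univ,
      if_true]
    rw [← Complex.ofReal_mul, inv_mul_cancel₀ (by linarith [hl i])]
    simp
  have e3 : Rs τ s = ∑ i, (((s + l i)⁻¹ : ℝ) : ℂ) • P i := Matrix.inv_eq_left_inv e2
  refine ⟨e3, by rw [e3, e2], by rw [e3]; exact mul_eq_one_comm.mp e2⟩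

theorem aux_int2 (c : ℝ) (hc : 0 < c) :
    IntegrableOn (fun s : ℝ => ((s + c)⁻¹) ^ 2) (Set.Ioi 0) ∧
      ∫ s in Set.Ioi (0:ℝ), ((s + c)⁻¹) ^ 2 = c⁻¹ := by
  have hd : ∀ x ∈ Set.Ici (0:ℝ), HasDerivAt (fun s : ℝ => -(s + c)⁻¹) (((x + c)⁻¹) ^ 2) x := by
    intro x hx
    have hx : 0 ≤ x := hx
    have h0 : x + c ≠ 0 := by linarith
    have := (((hasDerivAt_id x).add_const c).inv h0).neg
    refine HasDerivAt.congr_deriv this ?_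
    simp [neg_div]
  have ht : Filter.Tendsto (fun s : ℝ => -(s + c)⁻¹) Filter.atTop (𝓝 0) := by
    have := (tendsto_inv_atTop_zero.comp (Filter.tendsto_atTop_add_const_right _ c Filter.tendsto_id)).neg
    simpa [Function.comp_def] using this
  have hi := integrableOn_Ioi_deriv_of_nonneg' hd (fun x _ => by positivity) ht
  refine ⟨hi, ?_⟩
  rw [integral_Ioi_of_hasDerivAt_of_tendsto' hd hi ht]
  simp

theorem aux_intlog (l m : ℝ) (hl : 0 < l) (hm : 0 < m) :
    IntegrableOn (fun s : ℝ => (s + m)⁻¹ - (s + l)⁻¹) (Set.Ioi 0) ∧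
      ∫ s in Set.Ioi (0:ℝ), ((s + m)⁻¹ - (s + l)⁻¹) = Real.log l - Real.log m := by
  have hd : ∀ x ∈ Set.Ici (0:ℝ), HasDerivAt (fun s : ℝ => Real.log (s + m) - Real.log (s + l))
      ((x + m)⁻¹ - (x + l)⁻¹) x := by
    intro x hx
    have hx : 0 ≤ x := hx
    have h0 : x + l ≠ 0 := by linarith
    have h1 : x + m ≠ 0 := by linarith
    have := (((hasDerivAt_id x).add_const m).log h1).sub (((hasDerivAt_id x).add_const l).log h0)
    refine HasDerivAt.congr_deriv this ?_
    simp
  have ht : Filter.Tendsto (fun s : ℝ => Real.log (s + m) - Real.log (s + l)) Filter.atTop (𝓝 0) := by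
    have h1 : Filter.Tendsto (fun s : ℝ => 1 + (m - l) * (s + l)⁻¹) Filter.atTop (𝓝 (1 + (m - l) * 0)) :=
      ((tendsto_inv_atTop_zero.comp
        (Filter.tendsto_atTop_add_const_right _ l Filter.tendsto_id)).const_mul _).const_add _
    have h2 := (Real.continuousAt_log (x := 1) (by norm_num)).tendsto
    rw [mul_zero, add_zero] at h1
    have h3 := h2.comp h1
    rw [Real.log_one] at h3
    refine h3.congr' ?_
    filter_upwards [Filter.eventually_gt_atTop 0] with s hs
    have : s + l ≠ 0 := by linarith
    rw [← Real.log_div (by linarith) this]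
    simp only [Function.comp]
    congr 1
    field_simp
    ring
  have hi : IntegrableOn (fun s : ℝ => (s + m)⁻¹ - (s + l)⁻¹) (Set.Ioi 0) := by
    rcases le_total m l with h | h
    · refine integrableOn_Ioi_deriv_of_nonneg' hd (fun x hx => ?_) ht
      have hx : 0 < x := hx
      rw [sub_nonneg]
      gcongr
    · refine integrableOn_Ioi_deriv_of_nonpos' hd (fun x hx => ?_) ht
      have hx : 0 < x := hx
      rw [sub_nonpos]
      gcongr
  refine ⟨hi, ?_⟩
  rw [integral_Ioi_of_hasDerivAt_of_tendsto' hd hi ht]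
  simp

theorem aux_mlog (τ : Matrix (Fin n) (Fin n) ℂ) (h : τ.PosDef) :
    IntegrableOn (fun s : ℝ => (((s + 1)⁻¹ : ℝ) : ℂ) • (1 : Matrix (Fin n) (Fin n) ℂ) - Rs τ s)
      (Set.Ioi 0) ∧
    ∫ s in Set.Ioi (0:ℝ), ((((s + 1)⁻¹ : ℝ) : ℂ) • (1 : Matrix (Fin n) (Fin n) ℂ) - Rs τ s)
      = mlog τ := by
  obtain ⟨l, P, hl, hPP, hP1, hτ, hlog, -, -⟩ := aux_spec τ h.1
  have hl := hl h
  have e : ∀ s ∈ Set.Ioi (0:ℝ), (((s + 1)⁻¹ : ℝ) : ℂ) • (1 : Matrix (Fin n) (Fin n) ℂ) - Rs τ s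
      = ∑ i, (((s + 1)⁻¹ - (s + l i)⁻¹ : ℝ) : ℂ) • P i := by
    intro s hs
    rw [(aux_R τ l P hl hPP hP1 hτ s hs).1, ← hP1, Finset.smul_sum, ← Finset.sum_sub_distrib]
    simp only [← sub_smul, Complex.ofReal_sub]
  have hi : ∀ i, IntegrableOn (fun s : ℝ => (((s + 1)⁻¹ - (s + l i)⁻¹ : ℝ) : ℂ) • P i) (Set.Ioi 0) :=
    fun i => ((aux_intlog (l i) 1 (hl i) one_pos).1.ofReal (𝕜 := ℂ)).smul_const (P i)
  constructor
  · rw [integrableOn_congr_fun e measurableSet_Ioi]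
    exact integrable_finsetSum _ fun i _ => hi i
  · rw [setIntegral_congr_fun measurableSet_Ioi e, integral_finsetSum _ fun i _ => hi i, hlog]
    refine Finset.sum_congr rfl fun i _ => ?_
    rw [integral_smul_const]
    congr 1
    have := integral_ofReal (𝕜 := ℂ) (μ := volume.restrict (Set.Ioi 0))
      (f := fun s : ℝ => (s + 1)⁻¹ - (s + l i)⁻¹)
    rw [(aux_intlog (l i) 1 (hl i) one_pos).2] at this
    simpa using this

/-- Bound, measurability, inverse. -/
theorem aux_bound (τ : Matrix (Fin n) (Fin n) ℂ) (h : τ.PosDef) :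
    ∃ C c : ℝ, 0 ≤ C ∧ 0 < c ∧ ∀ s ∈ Set.Ioi (0:ℝ), ‖Rs τ s‖ ≤ C * (s + c)⁻¹ := by
  obtain ⟨l, P, hl, hPP, hP1, hτ, hlog, -, -⟩ := aux_spec τ h.1
  have hl := hl h
  obtain ⟨c, hc, hcl⟩ : ∃ c : ℝ, 0 < c ∧ ∀ i, c < l i := by
    have : ∀ᶠ c in 𝓝[>] (0:ℝ), 0 < c ∧ ∀ i, c < l i := by
      refine Filter.Eventually.and (eventually_mem_nhdsWithin) ?_
      rw [Filter.eventually_all]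
      intro i
      exact nhdsWithin_le_nhds (Iio_mem_nhds (hl i))
    exact this.exists
  refine ⟨∑ i, ‖P i‖, c, by positivity, hc, fun s hs => ?_⟩
  have hs' : 0 < s := hs
  rw [(aux_R τ l P hl hPP hP1 hτ s hs).1, Finset.sum_mul]
  refine norm_sum_le_of_le _ fun i _ => ?_
  have := hl i
  rw [norm_smul, Complex.norm_real, Real.norm_of_nonneg (by positivity), mul_comm]
  gcongr
  exact (hcl i).le

theorem aux_meas (τ : Matrix (Fin n) (Fin n) ℂ) (h : τ.PosDef) :
    ContinuousOn (Rs τ) (Set.Ioi 0) := by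
  obtain ⟨l, P, hl, hPP, hP1, hτ, hlog, -, -⟩ := aux_spec τ h.1
  have hl := hl h
  refine ContinuousOn.congr (f := fun s : ℝ => ∑ i, (((s + l i)⁻¹ : ℝ) : ℂ) • P i) ?_
    (fun s hs => (aux_R τ l P hl hPP hP1 hτ s hs).1)
  refine continuousOn_finsetSum _ fun i _ => ContinuousOn.fun_smul ?_ continuousOn_const
  refine Complex.continuous_ofReal.comp_continuousOn ?_
  refine ContinuousOn.inv₀ (by fun_prop) fun s hs => ?_
  have : 0 < s := hs
  linarith [hl i]

theorem aux_res (τ ρ : Matrix (Fin n) (Fin n) ℂ) (h : τ.PosDef) (hr : ρ.PosDef) (s : ℝ)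
    (hs : 0 < s) : Rs τ s - Rs ρ s = Rs τ s * (ρ - τ) * Rs ρ s := by
  obtain ⟨l, P, hl, hPP, hP1, hτ, hlog, -, -⟩ := aux_spec τ h.1
  obtain ⟨l', P', hl', hPP', hP1', hτ', hlog', -, -⟩ := aux_spec ρ hr.1
  have h1 := (aux_R τ l P (hl h) hPP hP1 hτ s hs).2.1
  have h2 := (aux_R ρ l' P' (hl' hr) hPP' hP1' hτ' s hs).2.2
  have : ρ - τ = ((s : ℂ) • (1 : Matrix (Fin n) (Fin n) ℂ) + ρ) -
    ((s : ℂ) • (1 : Matrix (Fin n) (Fin n) ℂ) + τ) := by abel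
  rw [this, mul_sub, sub_mul, h1, mul_assoc, h2]
  simp

/-- integrability of R X R -/
theorem aux_RXR (τ X : Matrix (Fin n) (Fin n) ℂ) (h : τ.PosDef) :
    IntegrableOn (fun s => Rs τ s * X * Rs τ s) (Set.Ioi 0) := by
  obtain ⟨C, c, hC, hc, hb⟩ := aux_bound τ h
  refine Integrable.mono' (g := fun s => C ^ 2 * ‖X‖ * ((s + c)⁻¹) ^ 2)
    ((aux_int2 c hc).1.const_mul _) ?_ ?_
  · have := aux_meas τ h
    exact ContinuousOn.aestronglyMeasurable ((this.mul continuousOn_const).mul this)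
      measurableSet_Ioi
  · refine (ae_restrict_iff' measurableSet_Ioi).2 (Filter.Eventually.of_forall fun s hs => ?_)
    have hs' : 0 < s := hs
    calc ‖Rs τ s * X * Rs τ s‖ ≤ ‖Rs τ s‖ * ‖X‖ * ‖Rs τ s‖ :=
          (norm_mul_le _ _).trans (by gcongr; exact norm_mul_le _ _)
      _ ≤ (C * (s + c)⁻¹) * ‖X‖ * (C * (s + c)⁻¹) := by gcongr <;> exact hb s hs
      _ = _ := by ring

theorem aux_deriv (τ X : Matrix (Fin n) (Fin n) ℂ) (h : τ.PosDef) (hX : X.IsHermitian) :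
    HasDerivAt (fun t : ℝ => mlog (τ + t • X)) (∫ s in Set.Ioi (0:ℝ), Rs τ s * X * Rs τ s) 0 := by
  obtain ⟨C, c, hC, hc, hb⟩ := aux_bound τ h
  set K : ℝ := C ^ 3 * ‖X‖ ^ 2 * 2 * c⁻¹ with hK
  set D := ∫ s in Set.Ioi (0:ℝ), Rs τ s * X * Rs τ s with hD
  have hev : ∀ᶠ t in 𝓝 (0:ℝ), |t| * (‖X‖ * (C * c⁻¹)) < 1 / 2 := by
    have : Filter.Tendsto (fun t : ℝ => |t| * (‖X‖ * (C * c⁻¹))) (𝓝 0)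
        (𝓝 (|0| * (‖X‖ * (C * c⁻¹)))) := Continuous.tendsto (by fun_prop) 0
    exact this.eventually (gt_mem_nhds (by simp))
  have main : ∀ᶠ t in 𝓝 (0:ℝ), ‖mlog (τ + t • X) - mlog τ - t • D‖ ≤ (K * c⁻¹) * ‖t ^ 2‖ := by
    filter_upwards [hev, aux_open τ X h hX] with t ht hp
    obtain ⟨i1, e1⟩ := aux_mlog τ h
    obtain ⟨i2, e2⟩ := aux_mlog _ hp
    rw [← e1, ← e2, ← integral_sub i2 i1, hD, ← integral_smul]
    have i3 : Integrable (fun s => ((((s + 1)⁻¹ : ℝ) : ℂ) • (1 : Matrix (Fin n) (Fin n) ℂ) -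
        Rs (τ + t • X) s) - ((((s + 1)⁻¹ : ℝ) : ℂ) • (1 : Matrix (Fin n) (Fin n) ℂ) - Rs τ s))
        (volume.restrict (Set.Ioi 0)) := i2.sub i1
    have i4 : Integrable (fun s => t • (Rs τ s * X * Rs τ s)) (volume.restrict (Set.Ioi 0)) :=
      (aux_RXR τ X h).smul t
    rw [← integral_sub i3 i4]
    have hK2 : (K * c⁻¹) * ‖t ^ 2‖ = ∫ s in Set.Ioi (0:ℝ), (K * ‖t ^ 2‖) * ((s + c)⁻¹) ^ 2 := by
      rw [integral_const_mul, (aux_int2 c hc).2]; ring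
    rw [hK2]
    refine norm_integral_le_of_norm_le ((aux_int2 c hc).1.const_mul _) ?_
    refine (ae_restrict_iff' measurableSet_Ioi).2 (Filter.Eventually.of_forall fun s hs => ?_)
    have hs' : 0 < s := hs
    set R := Rs τ s with hR
    set S := Rs (τ + t • X) s with hS
    have r : R - S = t • (R * X * S) := by
      rw [hR, hS, aux_res τ _ h hp s hs']
      simp
    have hbs := hb s hs
    have hsc : (s + c)⁻¹ ≤ c⁻¹ := by gcongr; linarith
    have hRc : ‖R‖ ≤ C * c⁻¹ := hbs.trans (by gcongr)
    have hS2 : ‖S‖ ≤ 2 * ‖R‖ := by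
      have a : S = R - t • (R * X * S) := by rw [← r]; abel
      have b : ‖S‖ ≤ ‖R‖ + |t| * (‖R‖ * ‖X‖ * ‖S‖) := by
        conv_lhs => rw [a]
        refine (norm_sub_le _ _).trans ?_
        rw [norm_smul, Real.norm_eq_abs]
        gcongr
        exact (norm_mul_le _ _).trans (by gcongr; exact norm_mul_le _ _)
      have d : |t| * (‖R‖ * ‖X‖ * ‖S‖) ≤ 1 / 2 * ‖S‖ := by
        calc |t| * (‖R‖ * ‖X‖ * ‖S‖) ≤ |t| * ((C * c⁻¹) * ‖X‖ * ‖S‖) := by gcongr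
          _ = |t| * (‖X‖ * (C * c⁻¹)) * ‖S‖ := by ring
          _ ≤ _ := by gcongr
      linarith
    have e : ((((s + 1)⁻¹ : ℝ) : ℂ) • (1 : Matrix (Fin n) (Fin n) ℂ) - S) -
        ((((s + 1)⁻¹ : ℝ) : ℂ) • (1 : Matrix (Fin n) (Fin n) ℂ) - R) - t • (R * X * R)
        = -(t ^ 2 • (R * X * (R * X * S))) := by
      have a : S = R - t • (R * X * S) := by rw [← r]; abel
      calc _ = (R - S) - t • (R * X * R) := by abel
        _ = t • (R * X * (S - R)) := by rw [r, ← smul_sub, mul_sub]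
        _ = t • (R * X * (- (t • (R * X * S)))) := by rw [← r]; congr 2; abel
        _ = _ := by
          rw [mul_neg, mul_smul_comm, smul_neg, smul_smul, sq]
    rw [e, norm_neg, norm_smul]
    have hRXS : ‖R * X * (R * X * S)‖ ≤ ‖R‖ * ‖X‖ * (‖R‖ * ‖X‖ * ‖S‖) := by
      refine (norm_mul_le _ _).trans ?_
      gcongr
      · exact norm_mul_le _ _
      · exact (norm_mul_le _ _).trans (by gcongr; exact norm_mul_le _ _)
    calc ‖t ^ 2‖ * ‖R * X * (R * X * S)‖ ≤ ‖t ^ 2‖ * (‖R‖ * ‖X‖ * (‖R‖ * ‖X‖ * ‖S‖)) := by gcongr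
      _ ≤ ‖t ^ 2‖ * ((C * (s + c)⁻¹) * ‖X‖ * ((C * (s + c)⁻¹) * ‖X‖ * (2 * (C * c⁻¹)))) := by
          gcongr
          exact hS2.trans (by gcongr)
      _ = _ := by rw [hK]; ring
  refine hasDerivAt_iff_isLittleO.2 ?_
  simp only [zero_smul, add_zero, sub_zero]
  refine (Asymptotics.IsBigO.of_bound _ main).trans_isLittleO ?_
  simpa using Asymptotics.isLittleO_pow_pow (𝕜 := ℝ) (m := 1) (n := 2) (by norm_num)

/-- The real-linear functional `M ↦ Re Tr (M Y)`. -/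
noncomputable def trL (Y : Matrix (Fin n) (Fin n) ℂ) : Matrix (Fin n) (Fin n) ℂ →L[ℝ] ℝ :=
  LinearMap.toContinuousLinearMap
    { toFun := fun M => ((M * Y).trace).re
      map_add' := by intro a b; simp [add_mul]
      map_smul' := by intro a b; simp }

theorem trL_apply (Y M : Matrix (Fin n) (Fin n) ℂ) : trL Y M = ((M * Y).trace).re := rfl

theorem aux_RtR (τ : Matrix (Fin n) (Fin n) ℂ) (h : τ.PosDef) :
    ∫ s in Set.Ioi (0:ℝ), Rs τ s * τ * Rs τ s = 1 := by
  obtain ⟨l, P, hl, hPP, hP1, hτ, hlog, -, -⟩ := aux_spec τ h.1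
  have hl := hl h
  have mulP : ∀ a b : Fin n → ℂ, (∑ i, a i • P i) * (∑ i, b i • P i) = ∑ i, (a i * b i) • P i := by
    intro a b
    rw [Finset.sum_mul_sum]
    refine Finset.sum_congr rfl fun i _ => ?_
    simp only [smul_mul_smul_comm, hPP, smul_ite, smul_zero, Finset.sum_ite_eq, Finset.mem_univ,
      if_true]
  have e : ∀ s ∈ Set.Ioi (0:ℝ), Rs τ s * τ * Rs τ s
      = ∑ i, ((l i * ((s + l i)⁻¹) ^ 2 : ℝ) : ℂ) • P i := by
    intro s hs
    rw [(aux_R τ l P hl hPP hP1 hτ s hs).1]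
    conv_lhs => rw [hτ]
    rw [mulP, mulP]
    refine Finset.sum_congr rfl fun i _ => ?_
    congr 1
    push_cast
    ring
  have hi : ∀ i, IntegrableOn (fun s : ℝ => ((l i * ((s + l i)⁻¹) ^ 2 : ℝ) : ℂ) • P i) (Set.Ioi 0) :=
    fun i => (((aux_int2 (l i) (hl i)).1.const_mul (l i)).ofReal (𝕜 := ℂ)).smul_const (P i)
  rw [setIntegral_congr_fun measurableSet_Ioi e, integral_finsetSum _ fun i _ => hi i, ← hP1]
  refine Finset.sum_congr rfl fun i _ => ?_
  rw [integral_smul_const]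
  have := integral_ofReal (𝕜 := ℂ) (μ := volume.restrict (Set.Ioi 0))
    (f := fun s : ℝ => l i * ((s + l i)⁻¹) ^ 2)
  rw [integral_const_mul, (aux_int2 (l i) (hl i)).2, mul_inv_cancel₀ (hl i).ne'] at this
  erw [this]
  simp

theorem aux_swap (τ X : Matrix (Fin n) (Fin n) ℂ) (h : τ.PosDef) :
    ((τ * ∫ s in Set.Ioi (0:ℝ), Rs τ s * X * Rs τ s).trace).re = (X.trace).re := by
  rw [Matrix.trace_mul_comm, ← trL_apply, ← ContinuousLinearMap.integral_comp_comm _ (aux_RXR τ X h)]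
  have : ∀ s, trL τ (Rs τ s * X * Rs τ s) = trL X (Rs τ s * τ * Rs τ s) := by
    intro s
    rw [trL_apply, trL_apply, mul_assoc, mul_assoc, Matrix.trace_mul_comm,
      Matrix.trace_mul_comm _ X, Matrix.trace_mul_comm X]
    simp only [mul_assoc]
    rw [Matrix.trace_mul_comm X]
    simp only [mul_assoc]
  simp only [this]
  rw [ContinuousLinearMap.integral_comp_comm _ (aux_RXR τ τ h), aux_RtR τ h, trL_apply, one_mul]

theorem aux_first (σ τ X : Matrix (Fin n) (Fin n) ℂ) (h : τ.PosDef) (hX : X.IsHermitian)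
    (hXtr : X.trace = 0) :
    HasDerivAt (fun η : ℝ => vonNeumannRelEnt σ (τ + η • X)) (trL X (mlog τ - mlog σ)) 0 := by
  have h1 := (aux_deriv τ X h hX).sub_const (mlog σ)
  have h2 : HasDerivAt (fun t : ℝ => τ + t • X) X 0 := by
    exact HasDerivAt.congr_deriv (((hasDerivAt_id (0:ℝ)).smul_const X).const_add τ) (one_smul _ _)
  have h3 := h2.mul h1
  have h4 := (trL (1 : Matrix (Fin n) (Fin n) ℂ)).hasFDerivAt.comp_hasDerivAt (0:ℝ) h3
  have e : (fun η : ℝ => vonNeumannRelEnt σ (τ + η • X)) = (trL (1 : Matrix (Fin n) (Fin n) ℂ)) ∘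
      ((fun t : ℝ => τ + t • X) * fun x => mlog (τ + x • X) - mlog σ) := by
    funext η
    simp [vonNeumannRelEnt, trL_apply]
  rw [e]
  refine h4.congr_deriv ?_
  · simp only [trL_apply, mul_one, zero_smul, add_zero, Matrix.trace_add, Complex.add_re]
    rw [aux_swap τ X h, hXtr, Matrix.trace_mul_comm X]
    simp

theorem aux_final (σ A B : Matrix (Fin n) (Fin n) ℂ) (hσ : σ.PosDef)
    (hA : A.IsHermitian) (hB : B.IsHermitian) (hBtr : B.trace = 0) :
    IntegrableOn (fun s : ℝ => ((Rs σ s * A * Rs σ s * B).trace).re) (Set.Ioi 0) ∧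
    ∃ φ : ℝ → ℝ,
      (∀ᶠ ε in 𝓝 (0:ℝ),
        HasDerivAt (fun η : ℝ => vonNeumannRelEnt σ (σ + ε • A + η • B)) (φ ε) 0) ∧
      HasDerivAt φ (∫ s in Set.Ioi (0:ℝ), ((Rs σ s * A * Rs σ s * B).trace).re) 0 := by
  have hi := aux_RXR σ A hσ
  refine ⟨(trL B).integrable_comp hi, fun ε => trL B (mlog (σ + ε • A) - mlog σ), ?_, ?_⟩
  · filter_upwards [aux_open σ A hσ hA] with ε hε
    exact aux_first σ (σ + ε • A) B hε hB hBtr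
  · have e := ContinuousLinearMap.integral_comp_comm (trL B) hi
    simp only [trL_apply B] at e
    rw [e]
    exact (trL B).hasFDerivAt.comp_hasDerivAt (0:ℝ) ((aux_deriv σ A hσ hA).sub_const (mlog σ))

end helpers

/-- **The Hessian of the von Neumann relative entropy at its minimum is the BKM-tilde
pairing.** For a positive definite state `σ` of trace one and traceless Hermitian
directions `A, B`, the mixed second derivative `∂_ε ∂_η |₀ H_σ(σ + εA + ηB)` exists and
equals `∫₀^∞ Re Tr[(s·I + σ)⁻¹ A (s·I + σ)⁻¹ B] ds`, an absolutely convergent improper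
integral. -/
theorem relEnt_hessian_eq_bkm
    (n : ℕ) (hn : 1 ≤ n)
    (σ : Matrix (Fin n) (Fin n) ℂ) (hσ : σ.PosDef) (hσtr : σ.trace = 1)
    (A B : Matrix (Fin n) (Fin n) ℂ) (hA : A.IsHermitian) (hB : B.IsHermitian)
    (hAtr : A.trace = 0) (hBtr : B.trace = 0) :
    MeasureTheory.IntegrableOn
      (fun s : ℝ =>
        ((((s : ℂ) • (1 : Matrix (Fin n) (Fin n) ℂ) + σ)⁻¹ * A * ((s : ℂ) • 1 + σ)⁻¹ * B).trace).re)
      (Set.Ioi 0) ∧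
    ∃ φ : ℝ → ℝ,
      (∀ᶠ ε in 𝓝 (0:ℝ),
        HasDerivAt (fun η : ℝ => vonNeumannRelEnt σ (σ + ε • A + η • B)) (φ ε) 0) ∧
      HasDerivAt φ
        (∫ s in Set.Ioi (0:ℝ),
          ((((s : ℂ) • (1 : Matrix (Fin n) (Fin n) ℂ) + σ)⁻¹ * A * ((s : ℂ) • 1 + σ)⁻¹ * B).trace).re)
        0 := by
  exact aux_final σ A B hσ hA hB hBtr
end

section
/- Let n ≥ 1, let σ ∈ Matrix (Fin n) (Fin n) ℂ be positive definite with Tr σ = 1, and let Φ : Matrix (Fin n) (Fin n) ℂ → Matrix (Fin n) (Fin n) ℂ be a linear map mapping Hermitian matrices to Hermitian matrices, with Φ(σ) = 0 and with Φ injective on the real subspace T of traceless Hermitian matrices. Define I(ρ) := −Re Tr[(log ρ − log σ)·Φ(ρ)] on the set 𝔓₊ of positive definite matrices of trace 1. Assume: (a) I(ρ) ≥ 0 for all ρ ∈ 𝔓₊ and I is convex on 𝔓₊; (b) Φ is selfadjoint with respect to the BKM-tilde inner product, i.e. ⟨Φ(A), B⟩_BKM~ = ⟨A, Φ(B)⟩_BKM~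 for all Hermitian A, B, where ⟨A,B⟩_BKM~ := Re Tr[A·∫₀^∞ (t·I+σ)⁻¹ B (t·I+σ)⁻¹ dt]. Then I(ρ) > 0 for every ρ ∈ 𝔓₊ with ρ ≠ σ. -/
open scoped ComplexOrder Matrix

/-- The entropy production functional `I(ρ) := −Re Tr[(log ρ − log σ) Φ(ρ)]`. -/
noncomputable def entProd {n : ℕ} (σ : Matrix (Fin n) (Fin n) ℂ)
    (Φ : Matrix (Fin n) (Fin n) ℂ →ₗ[ℂ] Matrix (Fin n) (Fin n) ℂ)
    (ρ : Matrix (Fin n) (Fin n) ℂ) : ℝ :=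
  -(((mlog ρ - mlog σ) * Φ ρ).trace).re

/-- The BKM-tilde pairing
`⟨A,B⟩_BKM~ := Re Tr[A ∫₀^∞ (t·I+σ)⁻¹ B (t·I+σ)⁻¹ dt]`, written as a real improper
integral. -/
noncomputable def bkmTilde {n : ℕ} (σ A B : Matrix (Fin n) (Fin n) ℂ) : ℝ :=
  ∫ t in Set.Ioi (0:ℝ),
    ((A * ((t : ℂ) • (1 : Matrix (Fin n) (Fin n) ℂ) + σ)⁻¹ * B * ((t : ℂ) • 1 + σ)⁻¹).trace).re

open Filter Topology MeasureTheory
open scoped Matrix.Norms.L2Operator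

section helpers

theorem aux_int_log (l : ℝ) (hl : 0 < l) :
    IntegrableOn (fun t : ℝ => (1 + t)⁻¹ - (t + l)⁻¹) (Set.Ioi 0) ∧
    ∫ t in Set.Ioi (0:ℝ), ((1 + t)⁻¹ - (t + l)⁻¹) = Real.log l := by
  have hd : ∀ x ∈ Set.Ici (0:ℝ), HasDerivAt (fun t => Real.log (1 + t) - Real.log (t + l))
      ((1 + x)⁻¹ - (x + l)⁻¹) x := by
    intro x hx
    have hx : 0 ≤ x := hx
    have h1 := ((hasDerivAt_id x).const_add 1).log (by simp; positivity)
    have h2 := ((hasDerivAt_id x).add_const l).log (by simp; positivity)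
    have h3 := h1.sub h2
    simp only [id, one_div] at h3
    exact h3
  have ht : Tendsto (fun t => Real.log (1 + t) - Real.log (t + l)) atTop (𝓝 0) := by
    have h1 : Tendsto (fun t : ℝ => 1 + (1 - l) * (t + l)⁻¹) atTop (𝓝 (1 + (1 - l) * 0)) := by
      refine Tendsto.const_add _ (Tendsto.const_mul _ ?_)
      exact tendsto_inv_atTop_zero.comp (tendsto_atTop_add_const_right _ _ tendsto_id)
    have h2 := ((Real.continuousAt_log (x := 1 + (1 - l) * 0) (by simp)).tendsto.comp h1)
    simp only [mul_zero, add_zero, Real.log_one] at h2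
    refine h2.congr' ?_
    filter_upwards [eventually_gt_atTop 0] with t ht
    have : t + l ≠ 0 := by positivity
    rw [Function.comp, ← Real.log_div (by positivity) this]
    congr 1
    field_simp
    ring
  rcases le_total 1 l with h | h
  · have hp : ∀ x ∈ Set.Ioi (0:ℝ), 0 ≤ (1 + x)⁻¹ - (x + l)⁻¹ := by
      intro x hx
      have hx : 0 < x := hx
      rw [sub_nonneg]
      exact inv_anti₀ (by positivity) (by linarith)
    refine ⟨integrableOn_Ioi_deriv_of_nonneg' hd hp ht, ?_⟩
    rw [integral_Ioi_of_hasDerivAt_of_nonneg' hd hp ht]; simp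
  · have hp : ∀ x ∈ Set.Ioi (0:ℝ), (1 + x)⁻¹ - (x + l)⁻¹ ≤ 0 := by
      intro x hx
      have hx : 0 < x := hx
      rw [sub_nonpos]
      exact inv_anti₀ (by positivity) (by linarith)
    refine ⟨integrableOn_Ioi_deriv_of_nonpos' hd hp ht, ?_⟩
    rw [integral_Ioi_of_hasDerivAt_of_nonpos' hd hp ht]; simp

variable {n : ℕ}

noncomputable def aux_R_s18 (ρ : Matrix (Fin n) (Fin n) ℂ) (t : ℝ) : Matrix (Fin n) (Fin n) ℂ :=
  ((t : ℂ) • (1 : Matrix (Fin n) (Fin n) ℂ) + ρ)⁻¹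

theorem aux_spec_s18 (ρ : Matrix (Fin n) (Fin n) ℂ) (h : ρ.IsHermitian) :
    ρ = (h.eigenvectorUnitary : Matrix (Fin n) (Fin n) ℂ) *
      Matrix.diagonal (fun i => ((h.eigenvalues i : ℝ) : ℂ)) *
      (h.eigenvectorUnitary : Matrix (Fin n) (Fin n) ℂ)ᴴ := by
  conv_lhs => rw [h.spectral_theorem, Unitary.conjStarAlgAut_apply]
  rfl

theorem aux_UU (ρ : Matrix (Fin n) (Fin n) ℂ) (h : ρ.IsHermitian) :
    (h.eigenvectorUnitary : Matrix (Fin n) (Fin n) ℂ) *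
      (h.eigenvectorUnitary : Matrix (Fin n) (Fin n) ℂ)ᴴ = 1 :=
  Unitary.coe_mul_star_self h.eigenvectorUnitary

theorem aux_UU' (ρ : Matrix (Fin n) (Fin n) ℂ) (h : ρ.IsHermitian) :
    (h.eigenvectorUnitary : Matrix (Fin n) (Fin n) ℂ)ᴴ *
      (h.eigenvectorUnitary : Matrix (Fin n) (Fin n) ℂ) = 1 :=
  Unitary.coe_star_mul_self h.eigenvectorUnitary

theorem aux_smul_one_posDef {t : ℝ} (ht : 0 < t) :
    ((t : ℂ) • (1 : Matrix (Fin n) (Fin n) ℂ)).PosDef :=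
  Matrix.PosDef.one.smul (by exact_mod_cast ht)

theorem aux_smul_one_posSemidef {t : ℝ} (ht : 0 ≤ t) :
    ((t : ℂ) • (1 : Matrix (Fin n) (Fin n) ℂ)).PosSemidef :=
  Matrix.PosSemidef.one.smul (by exact_mod_cast ht)

theorem aux_posDef {ρ : Matrix (Fin n) (Fin n) ℂ} (h : ρ.PosDef) {t : ℝ} (ht : 0 ≤ t) :
    ((t : ℂ) • (1 : Matrix (Fin n) (Fin n) ℂ) + ρ).PosDef := 
  Matrix.PosDef.posSemidef_add (aux_smul_one_posSemidef ht) h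

theorem aux_R_spec {ρ : Matrix (Fin n) (Fin n) ℂ} (h : ρ.PosDef) {t : ℝ} (ht : 0 < t) :
    aux_R_s18 ρ t = (h.1.eigenvectorUnitary : Matrix (Fin n) (Fin n) ℂ) *
      Matrix.diagonal (fun i => (((t + h.1.eigenvalues i)⁻¹ : ℝ) : ℂ)) *
      (h.1.eigenvectorUnitary : Matrix (Fin n) (Fin n) ℂ)ᴴ := by
  unfold aux_R_s18
  apply Matrix.inv_eq_right_inv
  have h1 := aux_UU ρ h.1
  have h2 := aux_UU' ρ h.1
  have h3 := aux_spec_s18 ρ h.1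
  have hp := h.eigenvalues_pos
  set U := (h.1.eigenvectorUnitary : Matrix (Fin n) (Fin n) ℂ)
  set μ := h.1.eigenvalues
  have h4 : (t : ℂ) • (1 : Matrix (Fin n) (Fin n) ℂ) + ρ =
      U * Matrix.diagonal (fun i => ((t + μ i : ℝ) : ℂ)) * Uᴴ := by
    conv_lhs => rw [h3, ← h1]
    have : Matrix.diagonal (fun i => ((t + μ i : ℝ) : ℂ)) =
      (t:ℂ) • 1 + Matrix.diagonal (fun i => ((μ i : ℝ) : ℂ)) := by
      rw [Matrix.smul_one_eq_diagonal, Matrix.diagonal_add]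
      congr 1; ext i; push_cast; rfl
    rw [this, mul_add, add_mul]; simp
  rw [h4]
  calc _ = U * (Matrix.diagonal (fun i => ((t + μ i : ℝ) : ℂ)) * (Uᴴ * U) *
      Matrix.diagonal (fun i => (((t + μ i)⁻¹ : ℝ) : ℂ))) * Uᴴ := by noncomm_ring
    _ = 1 := by
      rw [h2, mul_one, Matrix.diagonal_mul_diagonal]
      have : (fun i => ((t + μ i : ℝ) : ℂ) * (((t + μ i)⁻¹ : ℝ) : ℂ)) = fun _ => 1 := by
        ext i
        have := hp i
        rw [← Complex.ofReal_mul, mul_inv_cancel₀ (by positivity)]; simp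
      rw [this, Matrix.diagonal_one, mul_one, h1]

theorem aux_trace (U C : Matrix (Fin n) (Fin n) ℂ) (d : Fin n → ℝ) :
    ((U * Matrix.diagonal (fun i => ((d i : ℝ) : ℂ)) * Uᴴ * C).trace).re =
      ∑ i, d i * ((Uᴴ * C * U) i i).re := by
  have : (U * Matrix.diagonal (fun i => ((d i : ℝ) : ℂ)) * Uᴴ * C).trace =
      (Matrix.diagonal (fun i => ((d i : ℝ) : ℂ)) * (Uᴴ * C * U)).trace := by
    rw [mul_assoc, mul_assoc, Matrix.trace_mul_comm, ← mul_assoc]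
    simp only [mul_assoc]
  rw [this, Matrix.trace, Complex.re_sum]
  refine Finset.sum_congr rfl fun i _ => ?_
  rw [Matrix.diag_apply, Matrix.diagonal_mul, Complex.re_ofReal_mul]

theorem aux_log_int {ρ : Matrix (Fin n) (Fin n) ℂ} (h : ρ.PosDef)
    (C : Matrix (Fin n) (Fin n) ℂ) :
    IntegrableOn (fun t : ℝ => (1 + t)⁻¹ * C.trace.re - ((aux_R_s18 ρ t * C).trace).re) (Set.Ioi 0) ∧
    ∫ t in Set.Ioi (0:ℝ), ((1 + t)⁻¹ * C.trace.re - ((aux_R_s18 ρ t * C).trace).re) =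
      ((mlog ρ * C).trace).re := by
  have h1 := aux_UU ρ h.1
  have hR := fun {t : ℝ} (ht : 0 < t) => aux_R_spec h ht
  have hp := h.eigenvalues_pos
  unfold mlog
  rw [dif_pos h.1]
  set U := (h.1.eigenvectorUnitary : Matrix (Fin n) (Fin n) ℂ)
  set μ := h.1.eigenvalues
  have hC : C.trace.re = ∑ i, ((Uᴴ * C * U) i i).re := by
    have := aux_trace U C (fun _ => 1)
    simpa [h1] using this
  have he : Set.EqOn (fun t : ℝ => ∑ i, ((1 + t)⁻¹ - (t + μ i)⁻¹) * ((Uᴴ * C * U) i i).re)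
    (fun t : ℝ => (1 + t)⁻¹ * C.trace.re - ((aux_R_s18 ρ t * C).trace).re) (Set.Ioi 0) := by
    intro t ht
    simp only
    rw [hR ht, aux_trace, hC, Finset.mul_sum, ← Finset.sum_sub_distrib]
    simp only [sub_mul]
  have hi : ∀ i ∈ Finset.univ, IntegrableOn (fun t : ℝ => ((1 + t)⁻¹ - (t + μ i)⁻¹) * ((Uᴴ * C * U) i i).re)
      (Set.Ioi 0) := fun i _ => (aux_int_log _ (hp i)).1.mul_const _
  refine ⟨(integrable_finsetSum _ hi).congr ?_, ?_⟩
  · exact (ae_restrict_iff' measurableSet_Ioi).2 (Eventually.of_forall fun t ht => he ht)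
  · rw [← setIntegral_congr_fun measurableSet_Ioi he, integral_finsetSum _ hi, aux_trace]
    refine Finset.sum_congr rfl fun i _ => ?_
    rw [integral_mul_const, (aux_int_log _ (hp i)).2]

theorem aux_log_diff {ρ σ : Matrix (Fin n) (Fin n) ℂ} (h : ρ.PosDef) (hσ : σ.PosDef)
    (C : Matrix (Fin n) (Fin n) ℂ) :
    (((mlog ρ - mlog σ) * C).trace).re =
    ∫ t in Set.Ioi (0:ℝ), ((C * aux_R_s18 ρ t * (ρ - σ) * aux_R_s18 σ t).trace).re := by
  obtain ⟨a1, a2⟩ := aux_log_int h C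
  obtain ⟨b1, b2⟩ := aux_log_int hσ C
  rw [sub_mul, Matrix.trace_sub, Complex.sub_re, ← a2, ← b2, ← integral_sub a1 b1]
  refine setIntegral_congr_fun measurableSet_Ioi fun t ht => ?_
  have ht : 0 < t := ht
  have u1 := (aux_posDef h ht.le).isUnit
  have u2 := (aux_posDef hσ ht.le).isUnit
  rw [Matrix.isUnit_iff_isUnit_det] at u1 u2
  have e1 : aux_R_s18 ρ t * ((t : ℂ) • 1 + ρ) = 1 := Matrix.nonsing_inv_mul _ u1
  have e2 : ((t : ℂ) • 1 + σ) * aux_R_s18 σ t = 1 := Matrix.mul_nonsing_inv _ u2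
  have : aux_R_s18 ρ t * (ρ - σ) * aux_R_s18 σ t = aux_R_s18 σ t - aux_R_s18 ρ t := by
    have : ρ - σ = ((t : ℂ) • 1 + ρ) - ((t : ℂ) • 1 + σ) := by abel
    rw [this, mul_sub, sub_mul, e1, one_mul, mul_assoc, e2, mul_one]
  rw [mul_assoc C, mul_assoc C, this, Matrix.trace_mul_comm C, sub_mul, Matrix.trace_sub,
    Complex.sub_re]
  ring

theorem aux_lb_exists {ρ : Matrix (Fin n) (Fin n) ℂ} (h : ρ.IsHermitian) :
    ∃ m : ℝ, (ρ.PosDef → 0 < m) ∧ (ρ - (m : ℂ) • 1).PosSemidef := by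
  have h1 := aux_UU ρ h
  have h3 := aux_spec_s18 ρ h
  have hp : ρ.PosDef → ∀ i, 0 < h.eigenvalues i := fun hh => hh.eigenvalues_pos
  set U := (h.eigenvectorUnitary : Matrix (Fin n) (Fin n) ℂ)
  set μ := h.eigenvalues
  obtain ⟨m, hm, hm'⟩ : ∃ m : ℝ, (ρ.PosDef → 0 < m) ∧ ∀ i, m ≤ μ i := by
    rcases isEmpty_or_nonempty (Fin n) with hn | hn
    · exact ⟨1, fun _ => one_pos, fun i => hn.elim i⟩
    · obtain ⟨i, hi⟩ := Finite.exists_min μ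
      exact ⟨μ i, fun hh => hp hh i, hi⟩
  refine ⟨m, hm, ?_⟩
  have : ρ - (m : ℂ) • 1 = U * Matrix.diagonal (fun i => ((μ i - m : ℝ) : ℂ)) * Uᴴ := by
    conv_lhs => rw [h3, ← h1]
    have : Matrix.diagonal (fun i => ((μ i - m : ℝ) : ℂ)) =
      Matrix.diagonal (fun i => ((μ i : ℝ) : ℂ)) - (m:ℂ) • 1 := by
      rw [Matrix.smul_one_eq_diagonal, Matrix.diagonal_sub]
      congr 1; ext i; push_cast; rfl
    rw [this, mul_sub, sub_mul]; simp
  rw [this]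
  refine Matrix.PosSemidef.mul_mul_conjTranspose_same ?_ _
  refine Matrix.PosSemidef.diagonal fun i => ?_
  simp only [Pi.zero_apply]
  exact_mod_cast sub_nonneg.2 (hm' i)

theorem aux_lb_eig {ρ : Matrix (Fin n) (Fin n) ℂ} (h : ρ.IsHermitian) (m : ℝ)
    (hm : (ρ - (m : ℂ) • 1).PosSemidef) (i : Fin n) : m ≤ h.eigenvalues i := by
  have h2 := aux_UU' ρ h
  have h3 := aux_spec_s18 ρ h
  set U := (h.eigenvectorUnitary : Matrix (Fin n) (Fin n) ℂ)
  set μ := h.eigenvalues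
  have h4 := hm.conjTranspose_mul_mul_same U
  have : Uᴴ * (ρ - (m : ℂ) • 1) * U = Matrix.diagonal (fun i => ((μ i - m : ℝ) : ℂ)) := by
    have e : Matrix.diagonal (fun i => ((μ i - m : ℝ) : ℂ)) =
      Matrix.diagonal (fun i => ((μ i : ℝ) : ℂ)) - (m:ℂ) • 1 := by
      rw [Matrix.smul_one_eq_diagonal, Matrix.diagonal_sub]
      congr 1; ext i; push_cast; rfl
    rw [e, mul_sub, sub_mul]
    congr 1
    · rw [h3]
      calc _ = (Uᴴ * U) * Matrix.diagonal (fun i => ((μ i : ℝ) : ℂ)) * (Uᴴ * U) := by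
            simp only [mul_assoc]
        _ = _ := by rw [h2]; simp
    · simp [h2]
  rw [this] at h4
  have h5 := h4.diag_nonneg (i := i)
  simp only [Matrix.diagonal_apply_eq] at h5
  have : (0:ℝ) ≤ μ i - m := by exact_mod_cast h5
  linarith

theorem aux_R_norm {ρ : Matrix (Fin n) (Fin n) ℂ} (h : ρ.PosDef) {m : ℝ} (hm0 : 0 < m)
    (hm : (ρ - (m : ℂ) • 1).PosSemidef) {t : ℝ} (ht : 0 < t) :
    ‖aux_R_s18 ρ t‖ ≤ (t + m)⁻¹ := by
  rw [aux_R_spec h ht]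
  have : (h.1.eigenvectorUnitary : Matrix (Fin n) (Fin n) ℂ)ᴴ =
    ((star h.1.eigenvectorUnitary : unitary (Matrix (Fin n) (Fin n) ℂ)) :
      Matrix (Fin n) (Fin n) ℂ) := rfl
  rw [this, CStarRing.norm_mul_coe_unitary, CStarRing.norm_coe_unitary_mul,
    Matrix.l2_opNorm_diagonal]
  refine (pi_norm_le_iff_of_nonneg (by positivity)).2 fun i => ?_
  have h6 := aux_lb_eig h.1 m hm i
  rw [Complex.norm_real, Real.norm_of_nonneg (by have := h.eigenvalues_pos i; positivity)]
  exact inv_anti₀ (by positivity) (by linarith)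

theorem aux_inv_cont {x : Matrix (Fin n) (Fin n) ℂ} (hx : IsUnit x) :
    ContinuousAt (fun y : Matrix (Fin n) (Fin n) ℂ => y⁻¹) x := by
  obtain ⟨u, rfl⟩ := hx
  have := NormedRing.inverse_continuousAt u
  refine this.congr (Eventually.of_forall fun y => ?_)
  exact (Matrix.nonsing_inv_eq_ringInverse y).symm

theorem aux_R_contOn {ρ : Matrix (Fin n) (Fin n) ℂ} (h : ρ.PosDef) :
    ContinuousOn (fun t => aux_R_s18 ρ t) (Set.Ioi 0) := by
  intro t ht
  refine ContinuousAt.continuousWithinAt ?_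
  have := aux_inv_cont (aux_posDef h (le_of_lt ht)).isUnit
  unfold aux_R_s18
  exact ContinuousAt.comp (f := fun t : ℝ => (t : ℂ) • (1 : Matrix (Fin n) (Fin n) ℂ) + ρ) this
    (by fun_prop)

theorem aux_trace_bound : ∃ K : ℝ, 0 ≤ K ∧ ∀ M : Matrix (Fin n) (Fin n) ℂ,
    ‖(M.trace).re‖ ≤ K * ‖M‖ := by
  let f := (Matrix.traceLinearMap (Fin n) ℂ ℂ).toContinuousLinearMap
  refine ⟨‖f‖, norm_nonneg _, fun M => ?_⟩
  exact (Complex.abs_re_le_norm _).trans (f.le_opNorm M)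

theorem aux_int_sq {m : ℝ} (hm : 0 < m) :
    IntegrableOn (fun t : ℝ => (t + m)⁻¹ * (t + m)⁻¹) (Set.Ioi 0) := by
  have := integrableOn_add_rpow_Ioi_of_lt (a := -2) (c := 0) (m := m) (by norm_num) (by linarith)
  refine this.congr_fun (fun t ht => ?_) measurableSet_Ioi
  have : 0 < t := ht
  simp only
  rw [Real.rpow_neg (by positivity), ← mul_inv]
  norm_cast
  rw [sq]

theorem aux_bound_s18 (C A : Matrix (Fin n) (Fin n) ℂ) : ∃ K : ℝ, ∀ (ρ σ : Matrix (Fin n) (Fin n) ℂ)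
    (m : ℝ), 0 < m → ρ.PosDef → σ.PosDef → (ρ - (m : ℂ) • 1).PosSemidef →
    (σ - (m : ℂ) • 1).PosSemidef → ∀ t : ℝ, 0 < t →
    ‖((C * aux_R_s18 ρ t * A * aux_R_s18 σ t).trace).re‖ ≤ K * ((t + m)⁻¹ * (t + m)⁻¹) := by
  obtain ⟨K, hK, hb⟩ := aux_trace_bound (n := n)
  refine ⟨K * (‖C‖ * ‖A‖), fun ρ σ m hm h1 h2 h3 h4 t ht => (hb _).trans ?_⟩
  have := aux_R_norm h1 hm h3 ht
  have := aux_R_norm h2 hm h4 ht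
  calc K * ‖C * aux_R_s18 ρ t * A * aux_R_s18 σ t‖
      ≤ K * (‖C‖ * ‖aux_R_s18 ρ t‖ * ‖A‖ * ‖aux_R_s18 σ t‖) := by
        gcongr
        refine (norm_mul_le _ _).trans ?_
        gcongr
        refine (norm_mul_le _ _).trans ?_
        gcongr
        exact norm_mul_le _ _
    _ ≤ K * (‖C‖ * (t + m)⁻¹ * ‖A‖ * (t + m)⁻¹) := by gcongr
    _ = _ := by ring

theorem aux_meas_s18 {ρ σ : Matrix (Fin n) (Fin n) ℂ} (h : ρ.PosDef) (hσ : σ.PosDef)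
    (C A : Matrix (Fin n) (Fin n) ℂ) :
    ContinuousOn (fun t => ((C * aux_R_s18 ρ t * A * aux_R_s18 σ t).trace).re) (Set.Ioi 0) := by
  have h1 := aux_R_contOn h
  have h2 := aux_R_contOn hσ
  have h3 : ContinuousOn (fun t => C * aux_R_s18 ρ t * A * aux_R_s18 σ t) (Set.Ioi 0) := by fun_prop
  have h4 : Continuous fun M : Matrix (Fin n) (Fin n) ℂ => M.trace.re :=
    Complex.continuous_re.comp (Continuous.matrix_trace continuous_id)
  exact h4.comp_continuousOn h3

theorem aux_integrable {σ : Matrix (Fin n) (Fin n) ℂ} (hσ : σ.PosDef)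
    (C A : Matrix (Fin n) (Fin n) ℂ) :
    IntegrableOn (fun t => ((C * aux_R_s18 σ t * A * aux_R_s18 σ t).trace).re) (Set.Ioi 0) := by
  obtain ⟨K, hK⟩ := aux_bound_s18 C A
  obtain ⟨m, hm, hm'⟩ := aux_lb_exists hσ.1
  refine Integrable.mono' ((aux_int_sq (hm hσ)).const_mul K)
    ((aux_meas_s18 hσ hσ C A).aestronglyMeasurable measurableSet_Ioi) ?_
  refine (ae_restrict_iff' measurableSet_Ioi).2 (Eventually.of_forall fun t ht => ?_)
  exact hK _ _ _ (hm hσ) hσ hσ hm' hm' t ht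

theorem aux_tendsto {ρ σ : Matrix (Fin n) (Fin n) ℂ} (hρ : ρ.PosDef) (hσ : σ.PosDef)
    (C : Matrix (Fin n) (Fin n) ℂ) :
    Tendsto (fun s : ℝ => ∫ t in Set.Ioi (0:ℝ),
      ((C * aux_R_s18 (s • ρ + (1 - s) • σ) t * (ρ - σ) * aux_R_s18 σ t).trace).re) (𝓝[>] 0)
      (𝓝 (bkmTilde σ C (ρ - σ))) := by
  obtain ⟨K, hK⟩ := aux_bound_s18 C (ρ - σ)
  obtain ⟨m₁, hm1, hm1'⟩ := aux_lb_exists hρ.1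
  obtain ⟨m₂, hm2, hm2'⟩ := aux_lb_exists hσ.1
  have hm1 := hm1 hρ
  have hm2 := hm2 hσ
  have low : ∀ (τ : Matrix (Fin n) (Fin n) ℂ) (a b : ℝ), b ≤ a → (τ - (a:ℂ) • 1).PosSemidef →
      (τ - (b:ℂ) • 1).PosSemidef := by
    intro τ a b hab h
    have := h.add (aux_smul_one_posSemidef (n := n) (sub_nonneg.2 hab))
    convert this using 1
    push_cast
    rw [sub_smul]; abel
  set m := min m₁ m₂
  have hm : 0 < m := lt_min hm1 hm2
  have l1 := low _ _ _ (min_le_left m₁ m₂) hm1'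
  have l2 := low _ _ _ (min_le_right m₁ m₂) hm2'
  have ev : ∀ᶠ s : ℝ in 𝓝[>] 0, 0 < s ∧ s < 1 :=
    (Ioo_mem_nhdsGT (show (0:ℝ) < 1 by norm_num))
  have pd : ∀ s : ℝ, 0 < s → s < 1 → (s • ρ + (1 - s) • σ).PosDef := fun s h0 h1 =>
    (hρ.smul h0).add (hσ.smul (sub_pos.2 h1))
  have pl : ∀ s : ℝ, 0 < s → s < 1 → ((s • ρ + (1 - s) • σ) - (m:ℂ) • 1).PosSemidef := by
    intro s h0 h1
    have := (l1.smul h0.le).add (l2.smul (sub_pos.2 h1).le)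
    convert this using 1
    rw [smul_sub, smul_sub]
    have : s • (m:ℂ) • (1 : Matrix (Fin n) (Fin n) ℂ) + (1 - s) • (m:ℂ) • 1 = (m:ℂ) • 1 := by
      rw [← add_smul]; simp
    rw [sub_add_sub_comm, this]
  unfold bkmTilde
  refine tendsto_integral_filter_of_dominated_convergence
    (fun t => K * ((t + m)⁻¹ * (t + m)⁻¹)) ?_ ?_ ((aux_int_sq hm).const_mul K) ?_
  · filter_upwards [ev] with s hs
    exact (aux_meas_s18 (pd s hs.1 hs.2) hσ C _).aestronglyMeasurable measurableSet_Ioi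
  · filter_upwards [ev] with s hs
    refine (ae_restrict_iff' measurableSet_Ioi).2 (Eventually.of_forall fun t ht => ?_)
    exact hK _ _ _ hm (pd s hs.1 hs.2) hσ (pl s hs.1 hs.2) l2 t ht
  · refine (ae_restrict_iff' measurableSet_Ioi).2 (Eventually.of_forall fun t ht => ?_)
    refine Tendsto.mono_left ?_ nhdsWithin_le_nhds
    have c0 : ContinuousAt (fun s : ℝ => aux_R_s18 (s • ρ + (1 - s) • σ) t) 0 := by
      unfold aux_R_s18
      refine ContinuousAt.comp (f := fun s : ℝ => (t : ℂ) • (1 : Matrix (Fin n) (Fin n) ℂ) +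
        (s • ρ + (1 - s) • σ)) (g := fun y : Matrix (Fin n) (Fin n) ℂ => y⁻¹) ?_ (by fun_prop)
      simpa using aux_inv_cont (aux_posDef hσ (le_of_lt ht)).isUnit
    have h4 : Continuous fun M : Matrix (Fin n) (Fin n) ℂ => M.trace.re :=
      Complex.continuous_re.comp (Continuous.matrix_trace continuous_id)
    have c1 : ContinuousAt (fun s : ℝ => C * aux_R_s18 (s • ρ + (1 - s) • σ) t * (ρ - σ) * aux_R_s18 σ t)
      0 := by fun_prop
    have c2 := (h4.continuousAt.comp c1).tendsto
    simpa [aux_R_s18, Function.comp_def] using c2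

theorem aux_bkm_comm (σ A B : Matrix (Fin n) (Fin n) ℂ) : bkmTilde σ A B = bkmTilde σ B A := by
  unfold bkmTilde
  congr 1; ext t; congr 1
  rw [mul_assoc, Matrix.trace_mul_comm]
  simp only [mul_assoc]

theorem aux_bkm_add {σ : Matrix (Fin n) (Fin n) ℂ} (hσ : σ.PosDef)
    (A B C : Matrix (Fin n) (Fin n) ℂ) :
    bkmTilde σ A (B + C) = bkmTilde σ A B + bkmTilde σ A C := by
  have := integral_add (aux_integrable hσ A B) (aux_integrable hσ A C)
  unfold bkmTilde
  unfold aux_R_s18 at this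
  rw [← this]
  congr 1; ext t
  rw [mul_add, add_mul, Matrix.trace_add, Complex.add_re]

theorem aux_bkm_smul (σ A B : Matrix (Fin n) (Fin n) ℂ) (r : ℝ) :
    bkmTilde σ A (r • B) = r * bkmTilde σ A B := by
  unfold bkmTilde
  rw [← integral_const_mul]
  congr 1; ext t
  rw [mul_smul_comm, smul_mul_assoc, Matrix.trace_smul, Complex.smul_re, smul_eq_mul]

theorem aux_bkm_pos {σ : Matrix (Fin n) (Fin n) ℂ} (hσ : σ.PosDef)
    (X : Matrix (Fin n) (Fin n) ℂ) (hX : X.IsHermitian) (h0 : bkmTilde σ X X = 0) : X = 0 := by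
  have key : ∀ t : ℝ, 0 < t → 0 ≤ ((X * aux_R_s18 σ t * X * aux_R_s18 σ t).trace).re ∧
      (((X * aux_R_s18 σ t * X * aux_R_s18 σ t).trace).re = 0 → X = 0) := by
    intro t ht
    have hp : (aux_R_s18 σ t).PosDef := (aux_posDef hσ ht.le).inv
    obtain ⟨B, hB, hB'⟩ : ∃ B : Matrix (Fin n) (Fin n) ℂ, IsUnit B ∧ aux_R_s18 σ t = Bᴴ * B := by
      open scoped MatrixOrder in
      obtain ⟨B, hB⟩ := CStarAlgebra.nonneg_iff_eq_star_mul_self.1 hp.posSemidef.nonneg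
      refine ⟨B, ?_, hB⟩
      have := hp.isUnit
      rw [Matrix.isUnit_iff_isUnit_det] at this ⊢
      rw [hB, Matrix.det_mul] at this
      exact isUnit_of_mul_isUnit_right this
    have e : (X * aux_R_s18 σ t * X * aux_R_s18 σ t).trace = ((B * X * Bᴴ)ᴴ * (B * X * Bᴴ)).trace := by
      simp only [Matrix.conjTranspose_mul, Matrix.conjTranspose_conjTranspose, hX.eq, hB']
      rw [← mul_assoc, Matrix.trace_mul_comm]
      simp only [mul_assoc]
    have nn := (Matrix.posSemidef_conjTranspose_mul_self (B * X * Bᴴ)).trace_nonneg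
    rw [e]
    obtain ⟨n1, n2⟩ := Complex.le_def.1 nn
    refine ⟨n1, fun hz => ?_⟩
    have : ((B * X * Bᴴ)ᴴ * (B * X * Bᴴ)).trace = 0 := Complex.ext hz n2.symm
    rw [Matrix.trace_conjTranspose_mul_self_eq_zero_iff] at this
    have hBH : IsUnit Bᴴ := hB.star
    rw [hBH.mul_left_eq_zero, hB.mul_right_eq_zero] at this
    exact this
  have h1 : 0 ≤ᵐ[volume.restrict (Set.Ioi (0:ℝ))]
      fun t => ((X * aux_R_s18 σ t * X * aux_R_s18 σ t).trace).re :=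
    (ae_restrict_iff' measurableSet_Ioi).2 (Eventually.of_forall fun t ht => (key t ht).1)
  have h2 := (integral_eq_zero_iff_of_nonneg_ae h1 (aux_integrable hσ X X)).1 h0
  have h3 := (ae_restrict_iff' measurableSet_Ioi).1 h2
  by_contra hne
  have h4 : ∀ᵐ t : ℝ, t ∉ Set.Ioi (0:ℝ) := by
    filter_upwards [h3] with t ht hmem
    exact hne ((key t hmem).2 (ht hmem))
  have h5 : volume (Set.Ioi (0:ℝ)) = 0 := by
    rw [measure_eq_zero_iff_ae_notMem]; exact h4
  simp at h5

end helpers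
/-- **Strict positivity of the entropy production under BKM detailed balance.**
Let `σ` be a positive definite state of trace one and `Φ` a linear map preserving
Hermitian matrices, with `Φ σ = 0` and `Φ` injective on the real subspace of traceless
Hermitian matrices. Assume the entropy production `I` is nonnegative and convex on the
set `𝔓₊` of positive definite states of trace one, and that `Φ` is selfadjoint with
respect to the BKM-tilde inner product. Then `I(ρ) > 0` for every `ρ ∈ 𝔓₊` with
`ρ ≠ σ`. -/
theorem entropy_production_strictly_positive
    (n : ℕ) (hn : 1 ≤ n)
    (σ : Matrix (Fin n) (Fin n) ℂ) (hσ : σ.PosDef) (hσtr : σ.trace = 1)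
    (Φ : Matrix (Fin n) (Fin n) ℂ →ₗ[ℂ] Matrix (Fin n) (Fin n) ℂ)
    (hΦherm : ∀ A : Matrix (Fin n) (Fin n) ℂ, A.IsHermitian → (Φ A).IsHermitian)
    (hΦσ : Φ σ = 0)
    (hΦinj : ∀ A : Matrix (Fin n) (Fin n) ℂ,
      A.IsHermitian → A.trace = 0 → Φ A = 0 → A = 0)
    (hnonneg : ∀ ρ : Matrix (Fin n) (Fin n) ℂ, ρ.PosDef → ρ.trace = 1 →
      0 ≤ entProd σ Φ ρ)
    (hconvex : ∀ ρ₁ ρ₂ : Matrix (Fin n) (Fin n) ℂ, ρ₁.PosDef → ρ₁.trace = 1 →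
      ρ₂.PosDef → ρ₂.trace = 1 → ∀ t : ℝ, 0 ≤ t → t ≤ 1 →
      entProd σ Φ (t • ρ₁ + (1 - t) • ρ₂) ≤ t * entProd σ Φ ρ₁ + (1 - t) * entProd σ Φ ρ₂)
    (hsa : ∀ A B : Matrix (Fin n) (Fin n) ℂ, A.IsHermitian → B.IsHermitian →
      bkmTilde σ (Φ A) B = bkmTilde σ A (Φ B)) :
    ∀ ρ : Matrix (Fin n) (Fin n) ℂ, ρ.PosDef → ρ.trace = 1 → ρ ≠ σ →
      0 < entProd σ Φ ρ := by
  intro ρ hρ hρtr hne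
  have seg : ∀ τ : Matrix (Fin n) (Fin n) ℂ, τ.PosDef → ∀ s : ℝ, 0 < s → s < 1 →
      entProd σ Φ (s • τ + (1 - s) • σ) = -(s ^ 2 * ∫ t in Set.Ioi (0:ℝ),
      ((Φ (τ - σ) * aux_R_s18 (s • τ + (1 - s) • σ) t * (τ - σ) * aux_R_s18 σ t).trace).re) := by
    intro τ hτ s h0 h1
    have pd : (s • τ + (1 - s) • σ).PosDef := (hτ.smul h0).add (hσ.smul (sub_pos.2 h1))
    have hs : s • τ + (1 - s) • σ - σ = s • (τ - σ) := by
      rw [sub_smul, smul_sub, one_smul]; abel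
    have hP : Φ (s • τ + (1 - s) • σ) = s • Φ (τ - σ) := by
      have : s • τ + (1 - s) • σ = s • (τ - σ) + σ := by rw [← hs]; abel
      rw [this, map_add, hΦσ, add_zero, LinearMap.map_smul_of_tower]
    unfold entProd
    rw [hP, mul_smul_comm, Matrix.trace_smul, Complex.smul_re, aux_log_diff pd hσ, hs,
      smul_eq_mul, sq, mul_assoc]
    congr 2
    rw [← integral_const_mul]
    congr 1; ext t
    rw [mul_smul_comm, smul_mul_assoc, Matrix.trace_smul, Complex.smul_re, smul_eq_mul]
  have ev : ∀ᶠ s : ℝ in 𝓝[>] 0, 0 < s ∧ s < 1 :=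
    (Ioo_mem_nhdsGT (show (0:ℝ) < 1 by norm_num))
  have trc : ∀ τ : Matrix (Fin n) (Fin n) ℂ, τ.trace = 1 → ∀ s : ℝ,
      (s • τ + (1 - s) • σ).trace = 1 := by
    intro τ hτ s
    rw [Matrix.trace_add, Matrix.trace_smul, Matrix.trace_smul, hτ, hσtr, ← add_smul]
    simp
  have q1 : ∀ τ : Matrix (Fin n) (Fin n) ℂ, τ.PosDef → τ.trace = 1 →
      bkmTilde σ (Φ (τ - σ)) (τ - σ) ≤ 0 := by
    intro τ hτ hτtr
    refine le_of_tendsto (aux_tendsto hτ hσ (Φ (τ - σ))) ?_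
    filter_upwards [ev] with s hs
    have pd : (s • τ + (1 - s) • σ).PosDef := (hτ.smul hs.1).add (hσ.smul (sub_pos.2 hs.2))
    have h1 := hnonneg _ pd (trc τ hτtr s)
    rw [seg τ hτ s hs.1 hs.2] at h1
    have h2 : 0 < s ^ 2 := by have := hs.1; positivity
    by_contra h3
    push Not at h3
    have := mul_pos h2 h3
    linarith
  by_contra hcon
  have hzero : entProd σ Φ ρ = 0 := le_antisymm (not_lt.1 hcon) (hnonneg ρ hρ hρtr)
  have hσ0 : entProd σ Φ σ = 0 := by simp [entProd]
  have q2 : bkmTilde σ (Φ (ρ - σ)) (ρ - σ) = 0 := by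
    refine tendsto_nhds_unique (aux_tendsto hρ hσ (Φ (ρ - σ))) ?_
    refine (tendsto_const_nhds (x := (0:ℝ))).congr' ?_
    filter_upwards [ev] with s hs
    have pd : (s • ρ + (1 - s) • σ).PosDef := (hρ.smul hs.1).add (hσ.smul (sub_pos.2 hs.2))
    have h1 := hnonneg _ pd (trc ρ hρtr s)
    have h2 := hconvex ρ σ hρ hρtr hσ hσtr s hs.1.le hs.2.le
    rw [hzero, hσ0, mul_zero, mul_zero, add_zero] at h2
    have h3 := le_antisymm h2 h1
    rw [seg ρ hρ s hs.1 hs.2, neg_eq_zero] at h3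
    have h4 : s ^ 2 ≠ 0 := by have := hs.1; positivity
    exact ((mul_eq_zero.1 h3).resolve_left h4).symm
  have hA : (ρ - σ).IsHermitian := hρ.1.sub hσ.1
  set A := ρ - σ with hAdef
  have q3 : ∀ B : Matrix (Fin n) (Fin n) ℂ, B.IsHermitian → B.trace = 0 →
      bkmTilde σ (Φ A) B = 0 := by
    intro B hB hBtr
    obtain ⟨m, hm, hm'⟩ := aux_lb_exists hρ.1
    have hm := hm hρ
    have side : ∀ D : Matrix (Fin n) (Fin n) ℂ, D.IsHermitian → D.trace = 0 →
        bkmTilde σ (Φ A) D ≤ 0 := by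
      intro D hD hDtr
      obtain ⟨k, -, hk⟩ := aux_lb_exists hD
      have hpd : ∀ e : ℝ, 0 ≤ e → e * |k| < m → (ρ + e • D).PosDef := by
        intro e he hek
        have h1 := hm'.add (hk.smul he)
        have h2 : 0 < m + e * k := by
          have := mul_le_mul_of_nonneg_left (neg_abs_le k) he
          linarith
        have h3 := Matrix.PosDef.posSemidef_add h1 (aux_smul_one_posDef (n := n) h2)
        convert h3 using 1
        have : ((m + e * k : ℝ) : ℂ) • (1 : Matrix (Fin n) (Fin n) ℂ) =
          (m : ℂ) • 1 + e • (k : ℂ) • 1 := by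
          push_cast
          rw [add_smul, mul_smul]
          congr 1
        rw [this, smul_sub]; abel
      have hq : ∀ e : ℝ, 0 < e → e * |k| < m →
          2 * bkmTilde σ (Φ A) D + e * bkmTilde σ (Φ D) D ≤ 0 := by
        intro e he hek
        have h1 := q1 _ (hpd e he.le hek) (by
          rw [Matrix.trace_add, Matrix.trace_smul, hDtr, hρtr]; simp)
        have h2 : ρ + e • D - σ = A + e • D := by rw [hAdef]; abel
        have h3 : Φ (A + e • D) = Φ A + e • Φ D := by
          rw [map_add, LinearMap.map_smul_of_tower]
        rw [h2, h3, aux_bkm_add hσ, aux_bkm_smul, aux_bkm_comm σ _ A, aux_bkm_comm σ _ D,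
          aux_bkm_add hσ, aux_bkm_add hσ, aux_bkm_smul, aux_bkm_smul, ← hsa A D hA hD,
          aux_bkm_comm σ A, aux_bkm_comm σ D, aux_bkm_comm σ D, q2] at h1
        have h4 : e * (2 * bkmTilde σ (Φ A) D + e * bkmTilde σ (Φ D) D) ≤ 0 := by linarith
        by_contra h5
        push Not at h5
        have := mul_pos he h5
        linarith
      have ht : Tendsto (fun e : ℝ => 2 * bkmTilde σ (Φ A) D + e * bkmTilde σ (Φ D) D)
          (𝓝[>] 0) (𝓝 (2 * bkmTilde σ (Φ A) D + 0 * bkmTilde σ (Φ D) D)) := by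
        refine Tendsto.mono_left ?_ nhdsWithin_le_nhds
        exact Continuous.tendsto (by fun_prop) 0
      have hev : ∀ᶠ e : ℝ in 𝓝[>] 0, e * |k| < m := by
        refine nhdsWithin_le_nhds ?_
        have : Tendsto (fun e : ℝ => e * |k|) (𝓝 0) (𝓝 (0 * |k|)) :=
          Continuous.tendsto (by fun_prop) 0
        exact this.eventually (gt_mem_nhds (by simpa using hm))
      have := le_of_tendsto ht (by
        filter_upwards [ev, hev] with e h1 h2 using hq e h1.1 h2)
      linarith
    have s1 := side B hB hBtr
    have s2 := side ((-1 : ℝ) • B) (by rw [neg_one_smul]; exact hB.neg)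
      (by rw [Matrix.trace_smul, hBtr, smul_zero])
    rw [aux_bkm_smul] at s2
    linarith
  have hΦA := hΦherm A hA
  have q4 : bkmTilde σ (Φ A) σ = 0 := by
    rw [hsa A σ hA hσ.1, hΦσ]
    simp [bkmTilde]
  have q5 : bkmTilde σ (Φ A) (Φ A) = 0 := by
    set c : ℝ := (Φ A).trace.re with hc
    have hcc : (c : ℂ) = (Φ A).trace := by
      have h1 : star (Φ A).trace = (Φ A).trace := by
        rw [← Matrix.trace_conjTranspose, hΦA.eq]
      exact Complex.conj_eq_iff_re.1 h1
    have h2 := q3 (Φ A - c • σ) (hΦA.sub (hσ.1.smul (IsSelfAdjoint.all c))) (by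
      rw [Matrix.trace_sub, Matrix.trace_smul, hσtr, ← hcc]; simp)
    have h3 := aux_bkm_add hσ (Φ A) (Φ A - c • σ) (c • σ)
    rw [sub_add_cancel, h2, aux_bkm_smul, q4] at h3
    simpa using h3
  have q6 := hΦinj A hA (by rw [hAdef, Matrix.trace_sub, hρtr, hσtr, sub_self])
    (aux_bkm_pos hσ _ hΦA q5)
  exact hne (sub_eq_zero.1 q6)
end
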